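/- The limit as n → ∞ of S₃(n)^{1/π(n)} exists and equals β; that is, S₃(n) = (β + o(1))^{π(n)}. -/

import Mathlib

open scoped Classical

/-- A finite set of naturals is multiplicative `k`-Sidon if it contains no `2k`
distinct elements `a₁, …, aₖ, b₁, …, bₖ` with `a₁⋯aₖ = b₁⋯bₖ`. -/
def MulKSidon (k : ℕ) (A : Finset ℕ) : Prop :=
  ¬ ∃ a b : Fin k → ℕ, (∀ i, a i ∈ A) ∧ (∀ i, b i ∈ A) ∧
    Function.Injective (Sum.elim a b) ∧ (∏ i, a i) = (∏ i, b i)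

/-- `Sk k n`: the number of multiplicative `k`-Sidon subsets of `{1, …, n}`. -/
noncomputable def Sk (k n : ℕ) : ℕ :=
  ((Finset.Icc 1 n).powerset.filter (fun A => MulKSidon k A)).card

/-- `eOn G m`: the number of edges of the induced subgraph of `G` on `{1, …, m}`. -/
noncomputable def eOn (G : SimpleGraph ℕ) (m : ℕ) : ℕ :=
  (((Finset.Icc 1 m) ×ˢ (Finset.Icc 1 m)).filter
    (fun p => p.1 < p.2 ∧ G.Adj p.1 p.2)).card

/-- A graph on the positive integers is product-free if no three (not necessarily
distinct) edges `a₁b₁, a₂b₂, a₃b₃` satisfy `(a₁/b₁)·(a₂/b₂) = a₃/b₃` in `ℚ`. -/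
def ProductFree (G : SimpleGraph ℕ) : Prop :=
  (∀ a b : ℕ, G.Adj a b → 0 < a) ∧
  ∀ a₁ b₁ a₂ b₂ a₃ b₃ : ℕ, G.Adj a₁ b₁ → G.Adj a₂ b₂ → G.Adj a₃ b₃ →
    ((a₁ : ℚ)/b₁) * ((a₂ : ℚ)/b₂) ≠ (a₃ : ℚ)/b₃

/-- The value `∏_{m=1}^∞ (e(G_m) + m + 1)^{1/(m²+m)}` associated to a graph `G`. -/
noncomputable def gProd (G : SimpleGraph ℕ) : ℝ :=
  ∏' m : ℕ, ((eOn G (m + 1) : ℝ) + (m + 1) + 1) ^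
    ((1 : ℝ) / (((m : ℝ) + 1) ^ 2 + ((m : ℝ) + 1)))

/-- `β`: the supremum over all product-free graphs `G` of
`∏_{m=1}^∞ (e(G_m) + m + 1)^{1/(m²+m)}`. -/
noncomputable def beta : ℝ :=
  sSup {x : ℝ | ∃ G : SimpleGraph ℕ, ProductFree G ∧ x = gProd G}

/-!
A prime `p ≤ n` is large if `⌊n / p⌋` is small. Almost all primes up to `n` are large, an element
of `[n]` has at most one large prime factor, and a set `A` whose elements all have one is described
by its fibers `A_p = {x ≤ n / p | p * x ∈ A}`. If every `A_p` is empty, a singleton or an edge of a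
product-free graph `G`, then `A` is multiplicative 3-Sidon: cancelling the large primes from
`a₁a₂a₃ = b₁b₂b₃` leaves a relation among three edges. There are
`∏_p (e(G_{⌊n / p⌋}) + ⌊n / p⌋ + 1)` such sets. Conversely, the pairs in `[M]` that are fibers of a
multiplicative 3-Sidon set over three large primes form a product-free graph, and the elements with
no large prime factor, or over a prime whose fiber is too large or too rare, can be chosen in only
`exp(o(π(n)))` ways.

By the prime number theorem a proportion `1 / (m² + m)` of the primes up to `n` has `⌊n / p⌋ = m`,
so the `π(n)`-th root of the product tends to `∏ₘ (e(G_m) + m + 1)^{1/(m² + m)}`; a Chebyshev bound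
controls the primes with `⌊n / p⌋ > M`. The prime number theorem itself, as `ψ(x) ~ x`, follows
from the non-vanishing of `ζ` on `Re s = 1` by a Wiener–Ikehara type Tauberian argument with the
Fejér kernel.
-/

/-! ### A Tauberian theorem for Laplace transforms -/

section Tauberian

open MeasureTheory Filter Topology Set

/-- The Laplace transform of `h` converges to `G` on `Re z > 0`, and `G` is continuous up to the
boundary line `Re z = 0`. This is the analytic input of the Tauberian theorem. -/
structure LaplaceExtendsTo (h : ℝ → ℝ) (G : ℂ → ℂ) : Prop where
  continuousOn : ContinuousOn G {z | 0 ≤ z.re}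
  integral_eq : ∀ z : ℂ, 0 < z.re →
    ∫ u in Ioi (0 : ℝ), (h u : ℂ) * Complex.exp (-z * u) = G z

/-- `h` is (uniformly) slowly decreasing: it cannot drop by more than `η` over short intervals.
This is the Tauberian condition. -/
def SlowlyDecreasing (h : ℝ → ℝ) : Prop :=
  ∀ η > 0, ∃ δ > 0, ∀ u v, u ≤ v → v ≤ u + δ → h u - η ≤ h v

variable {h K w : ℝ → ℝ} {C η δ : ℝ} {G : ℂ → ℂ}

lemma norm_exp_I_mul_mul (t y : ℝ) : ‖Complex.exp (Complex.I * t * y)‖ = 1 := by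
  rw [mul_assoc, ← Complex.ofReal_mul, mul_comm, Complex.norm_exp_ofReal_mul_I]

lemma integrableOn_bounded_mul_exp (hm : Measurable h) (hb : ∀ u, |h u| ≤ C) {z : ℂ}
    (hz : 0 < z.re) :
    IntegrableOn (fun u : ℝ ↦ (h u : ℂ) * Complex.exp (-z * u)) (Ioi 0) := by
  have hexp : IntegrableOn (fun u : ℝ ↦ Complex.exp (-z * u)) (Ioi 0) :=
    integrableOn_exp_mul_complex_Ioi (by simpa using hz) 0
  exact hexp.bdd_mul (c := C) (Complex.measurable_ofReal.comp hm).aestronglyMeasurable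
    (.of_forall fun u ↦ by simpa using hb u)

lemma integral_mul_exp_mul_kernel (hm : Measurable h) (hb : ∀ u, |h u| ≤ C)
    (hL : LaplaceExtendsTo h G) (hw : Integrable w)
    (hKw : ∀ v : ℝ, (K v : ℂ) = ∫ t : ℝ, (w t : ℂ) * Complex.exp (Complex.I * t * v))
    {ε : ℝ} (hε : 0 < ε) (y : ℝ) :
    ∫ u in Ioi (0 : ℝ), (h u : ℂ) * Complex.exp (-(ε : ℂ) * u) * (K (y - u) : ℂ) =
      ∫ t : ℝ, (w t : ℂ) * Complex.exp (Complex.I * t * y) * G (ε + Complex.I * t) := by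
  have hint : Integrable
      (Function.uncurry fun t u : ℝ ↦ Complex.exp (Complex.I * t * ((y - u : ℝ) : ℂ)) *
        ((w t : ℂ) * ((h u : ℂ) * Complex.exp (-(ε : ℂ) * u))))
      (volume.prod (volume.restrict (Ioi 0))) := by
    refine Integrable.bdd_mul (c := 1)
      (hw.ofReal.mul_prod (integrableOn_bounded_mul_exp hm hb (z := ε) (by simpa using hε)))
      ?_ (.of_forall fun p ↦ (norm_exp_I_mul_mul _ _).le)
    exact Continuous.aestronglyMeasurable (by fun_prop)
  calc
    _ = ∫ u in Ioi (0 : ℝ), ∫ t : ℝ, Complex.exp (Complex.I * t * ((y - u : ℝ) : ℂ)) *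
          ((w t : ℂ) * ((h u : ℂ) * Complex.exp (-(ε : ℂ) * u))) := by
        refine setIntegral_congr_fun measurableSet_Ioi fun u _ ↦ ?_
        rw [hKw, ← integral_const_mul]
        exact integral_congr_ae (.of_forall fun t ↦ by ring)
    _ = ∫ t : ℝ, ∫ u in Ioi (0 : ℝ), Complex.exp (Complex.I * t * ((y - u : ℝ) : ℂ)) *
          ((w t : ℂ) * ((h u : ℂ) * Complex.exp (-(ε : ℂ) * u))) :=
        (integral_integral_swap hint).symm
    _ = _ := by
        congr 1 with t
        rw [← hL.integral_eq _ (by simpa using hε), ← integral_const_mul]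
        congr 1 with u
        have hsplit : Complex.exp (-(ε + Complex.I * t) * u) =
            Complex.exp (-(ε : ℂ) * u) * Complex.exp (-(Complex.I * t * u)) := by
          rw [← Complex.exp_add]; ring_nf
        have hshift : Complex.exp (Complex.I * t * ((y - u : ℝ) : ℂ)) =
            Complex.exp (Complex.I * t * y) * Complex.exp (-(Complex.I * t * u)) := by
          rw [← Complex.exp_add]; push_cast; ring_nf
        rw [hsplit, hshift]; ring

lemma tendsto_integral_mul_exp_mul (hm : Measurable h) (hb : ∀ u, |h u| ≤ C)
    (hK : Integrable K) :
    Tendsto (fun ε : ℝ ↦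
        ∫ u in Ioi (0 : ℝ), (h u : ℂ) * Complex.exp (-(ε : ℂ) * u) * (K u : ℂ))
      (𝓝[>] 0) (𝓝 (∫ u in Ioi (0 : ℝ), (h u : ℂ) * (K u : ℂ))) := by
  refine tendsto_integral_filter_of_dominated_convergence (fun u ↦ C * |K u|) ?_ ?_
    (hK.abs.const_mul C).restrict ?_
  · refine .of_forall fun ε ↦ AEStronglyMeasurable.mul (AEStronglyMeasurable.mul ?_ ?_) ?_
    · exact (Complex.measurable_ofReal.comp hm).aestronglyMeasurable
    · exact Continuous.aestronglyMeasurable (by fun_prop)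
    · exact hK.ofReal.aestronglyMeasurable.restrict
  · filter_upwards [self_mem_nhdsWithin] with ε (hε : 0 < ε)
    filter_upwards [ae_restrict_mem measurableSet_Ioi] with u (hu : 0 < u)
    have hexp : Real.exp ((-(ε : ℂ) * u).re) ≤ 1 := by
      rw [Real.exp_le_one_iff]
      have : 0 ≤ ε * u := by positivity
      simpa using this
    rw [norm_mul, norm_mul, Complex.norm_real, Complex.norm_real, Complex.norm_exp,
      Real.norm_eq_abs, Real.norm_eq_abs]
    gcongr
    simpa using mul_le_mul (hb u) hexp (Real.exp_pos _).le ((abs_nonneg _).trans (hb u))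
  · refine .of_forall fun u ↦ ?_
    have hcont : Continuous fun ε : ℝ ↦
        (h u : ℂ) * Complex.exp (-(ε : ℂ) * u) * (K u : ℂ) := by fun_prop
    simpa using (hcont.tendsto 0).mono_left (nhdsWithin_le_nhds (s := Ioi 0))

lemma tendsto_apply_add_I_mul (hG : ContinuousOn G {z | 0 ≤ z.re}) (t : ℝ) :
    Tendsto (fun ε : ℝ ↦ G (ε + Complex.I * t)) (𝓝[>] 0) (𝓝 (G (Complex.I * t))) := by
  refine (hG (Complex.I * t) (by simp)).tendsto.comp (tendsto_nhdsWithin_iff.2 ⟨?_, ?_⟩)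
  · have hcont : Continuous fun ε : ℝ ↦ (ε : ℂ) + Complex.I * t := by fun_prop
    simpa using (hcont.tendsto 0).mono_left (nhdsWithin_le_nhds (s := Ioi 0))
  · filter_upwards [self_mem_nhdsWithin] with ε (hε : 0 < ε)
    simpa using hε.le

lemma tendsto_integral_mul_apply_add_I_mul (hG : ContinuousOn G {z | 0 ≤ z.re})
    (hw : Continuous w) (hws : HasCompactSupport w) (y : ℝ) :
    Tendsto (fun ε : ℝ ↦
        ∫ t : ℝ, (w t : ℂ) * Complex.exp (Complex.I * t * y) * G (ε + Complex.I * t))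
      (𝓝[>] 0) (𝓝 (∫ t : ℝ, (w t : ℂ) * Complex.exp (Complex.I * t * y) * G (Complex.I * t))) := by
  have hcomp : IsCompact
      ((fun p : ℝ × ℝ ↦ (p.1 : ℂ) + Complex.I * p.2) '' (Icc 0 1 ×ˢ tsupport w)) :=
    (isCompact_Icc.prod hws.isCompact).image (by fun_prop)
  obtain ⟨D, hD⟩ := hcomp.exists_bound_of_continuousOn (hG.mono (by
    rintro _ ⟨p, hp, rfl⟩
    simpa using hp.1.1))
  refine tendsto_integral_filter_of_dominated_convergence (fun t ↦ D * |w t|) ?_ ?_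
    ((hw.integrable_of_hasCompactSupport hws).abs.const_mul D)
    (.of_forall fun t ↦ (tendsto_apply_add_I_mul hG t).const_mul _)
  · filter_upwards [self_mem_nhdsWithin] with ε (hε : 0 < ε)
    have hGε : Continuous fun t : ℝ ↦ G (ε + Complex.I * t) :=
      hG.comp_continuous (by fun_prop) fun t ↦ by simpa using hε.le
    have hwexp : Continuous fun t : ℝ ↦ (w t : ℂ) * Complex.exp (Complex.I * t * y) := by fun_prop
    exact (hwexp.mul hGε).aestronglyMeasurable
  · filter_upwards [Ioc_mem_nhdsGT (zero_lt_one : (0 : ℝ) < 1)] with ε hε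
    refine .of_forall fun t ↦ ?_
    rw [norm_mul, norm_mul, norm_exp_I_mul_mul, Complex.norm_real, Real.norm_eq_abs, mul_one,
      mul_comm]
    by_cases ht : w t = 0
    · simp [ht]
    · gcongr
      exact hD _ ⟨(ε, t), ⟨⟨hε.1.le, hε.2⟩, subset_tsupport _ ht⟩, rfl⟩

lemma integral_mul_kernel (hm : Measurable h) (hb : ∀ u, |h u| ≤ C)
    (hL : LaplaceExtendsTo h G) (hw : Continuous w) (hws : HasCompactSupport w)
    (hK : Integrable K)
    (hKw : ∀ v : ℝ, (K v : ℂ) = ∫ t : ℝ, (w t : ℂ) * Complex.exp (Complex.I * t * v)) (y : ℝ) :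
    ((∫ u in Ioi (0 : ℝ), h u * K (y - u) : ℝ) : ℂ) =
      ∫ t : ℝ, (w t : ℂ) * Complex.exp (Complex.I * t * y) * G (Complex.I * t) := by
  have hleft := tendsto_integral_mul_exp_mul hm hb (hK.comp_sub_left y)
  have hright := tendsto_integral_mul_apply_add_I_mul hL.continuousOn hw hws y
  rw [← tendsto_nhds_unique (hleft.congr' ?_) hright, ← integral_complex_ofReal]
  · simp only [Complex.ofReal_mul]
  · filter_upwards [self_mem_nhdsWithin] with ε hε
    exact integral_mul_exp_mul_kernel hm hb hL (hw.integrable_of_hasCompactSupport hws) hKw hε y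

lemma tendsto_integral_mul_kernel (hm : Measurable h) (hb : ∀ u, |h u| ≤ C)
    (hL : LaplaceExtendsTo h G) (hw : Continuous w) (hws : HasCompactSupport w)
    (hK : Integrable K)
    (hKw : ∀ v : ℝ, (K v : ℂ) = ∫ t : ℝ, (w t : ℂ) * Complex.exp (Complex.I * t * v)) :
    Tendsto (fun y : ℝ ↦ ∫ u in Ioi (0 : ℝ), h u * K (y - u)) atTop (𝓝 0) := by
  have hfreq : Tendsto (fun y : ℝ ↦ -(y / (2 * Real.pi))) atTop (cocompact ℝ) :=
    (tendsto_neg_atTop_atBot.comp (tendsto_id.atTop_div_const (by positivity))).mono_right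
      atBot_le_cocompact
  have hRL := (Real.tendsto_integral_exp_smul_cocompact
    (fun t : ℝ ↦ (w t : ℂ) * G (Complex.I * t))).comp hfreq
  have hC : Tendsto (fun y : ℝ ↦ ((∫ u in Ioi (0 : ℝ), h u * K (y - u) : ℝ) : ℂ)) atTop (𝓝 0) := by
    refine hRL.congr fun y ↦ ?_
    rw [integral_mul_kernel hm hb hL hw hws hK hKw, Function.comp_apply]
    congr 1 with t
    have hphase : (2 * Real.pi * -(t * -(y / (2 * Real.pi))) : ℝ) = t * y := by field_simp
    rw [Circle.smul_def, Real.fourierChar_apply, smul_eq_mul, hphase,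
      show ((t * y : ℝ) : ℂ) * Complex.I = Complex.I * t * y by push_cast; ring]
    ring
  simpa [Function.comp_def] using (Complex.continuous_re.tendsto 0).comp hC

/-- The triangle function, the Fourier transform of the Fejér kernel. -/
noncomputable def triangle (t : ℝ) : ℝ := max 0 (1 - |t|)

/-- The Fejér kernel `2 (1 - cos v) / v ^ 2`, written as a square so that it is manifestly
continuous and nonnegative. -/
noncomputable def fejerKernel (v : ℝ) : ℝ := Real.sinc (v / 2) ^ 2

/-- The `L¹`-normalised dilation of a kernel, concentrating at `0` as `l → ∞`. -/
def dilate (K : ℝ → ℝ) (l v : ℝ) : ℝ := l * K (l * v)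

lemma continuous_triangle : Continuous triangle := by unfold triangle; fun_prop

lemma triangle_eq_zero {t : ℝ} (ht : 1 ≤ |t|) : triangle t = 0 := max_eq_left (by linarith)

lemma triangle_neg (t : ℝ) : triangle (-t) = triangle t := by simp only [triangle, abs_neg]

lemma triangle_of_mem_Icc {t : ℝ} (ht : t ∈ Icc (0 : ℝ) 1) : triangle t = 1 - t := by
  rw [triangle, abs_of_nonneg ht.1, max_eq_right (by linarith [ht.2])]

lemma hasCompactSupport_triangle : HasCompactSupport triangle :=
  .intro (isCompact_Icc (a := (-1 : ℝ)) (b := 1)) fun _ hx ↦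
    triangle_eq_zero (le_of_not_ge fun hle ↦ hx (abs_le.1 hle))

lemma continuous_fejerKernel : Continuous fejerKernel :=
  (Real.continuous_sinc.comp (continuous_id.div_const 2)).pow 2

lemma fejerKernel_nonneg (v : ℝ) : 0 ≤ fejerKernel v := sq_nonneg _

lemma fejerKernel_mul_sq (v : ℝ) : fejerKernel v * v ^ 2 = 2 * (1 - Real.cos v) := by
  have hcos : Real.cos v = 1 - 2 * Real.sin (v / 2) ^ 2 := by
    rw [← Real.cos_two_mul_eq_one_sub]; ring_nf
  rcases eq_or_ne v 0 with rfl | hv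
  · simp
  · rw [fejerKernel, Real.sinc_of_ne_zero (by positivity), hcos]
    field_simp
    ring

lemma integrable_fejerKernel : Integrable fejerKernel := by
  refine (integrable_inv_one_add_sq.const_mul 5).mono'
    continuous_fejerKernel.aestronglyMeasurable (.of_forall fun v ↦ ?_)
  have hle_one : fejerKernel v ≤ 1 := (sq_le_one_iff_abs_le_one _).2 (Real.abs_sinc_le_one _)
  rw [Real.norm_eq_abs, abs_of_nonneg (fejerKernel_nonneg v), ← div_eq_mul_inv,
    le_div_iff₀ (by positivity), mul_add, mul_one, fejerKernel_mul_sq]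
  linarith [Real.neg_one_le_cos v]

lemma integral_fejerKernel_pos : 0 < ∫ v, fejerKernel v :=
  integral_pos_of_integrable_nonneg_nonzero continuous_fejerKernel integrable_fejerKernel
    fejerKernel_nonneg (x := 0) (by simp [fejerKernel])

lemma integral_one_sub_mul_exp {c : ℂ} (hc : c ≠ 0) :
    ∫ t in (0 : ℝ)..1, (1 - (t : ℂ)) * Complex.exp (c * t) =
      (Complex.exp c - 1 - c) / c ^ 2 := by
  have hderiv : ∀ t ∈ uIcc (0 : ℝ) 1,
      HasDerivAt (fun t : ℝ ↦ ((1 - (t : ℂ)) / c + 1 / c ^ 2) * Complex.exp (c * t))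
        ((1 - (t : ℂ)) * Complex.exp (c * t)) t := by
    intro t _
    have hid : HasDerivAt (fun t : ℝ ↦ (t : ℂ)) 1 t := Complex.ofRealCLM.hasDerivAt
    refine ((((hid.const_sub 1).div_const c).add_const (1 / c ^ 2)).fun_mul
      (hid.const_mul c).cexp).congr_deriv ?_
    field_simp
    ring
  rw [intervalIntegral.integral_eq_sub_of_hasDerivAt hderiv
    (Continuous.intervalIntegrable (by fun_prop) _ _)]
  simp
  field_simp
  ring

lemma integral_triangle_mul_exp (c : ℂ) :
    ∫ t : ℝ, (triangle t : ℂ) * Complex.exp (c * t) =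
      (∫ t in (0 : ℝ)..1, (1 - (t : ℂ)) * Complex.exp (-c * t)) +
        ∫ t in (0 : ℝ)..1, (1 - (t : ℂ)) * Complex.exp (c * t) := by
  have hcont : Continuous fun t : ℝ ↦ (triangle t : ℂ) * Complex.exp (c * t) := by
    have := continuous_triangle
    fun_prop
  have hhalf (d : ℂ) : ∫ t in (0 : ℝ)..1, (1 - (t : ℂ)) * Complex.exp (d * t) =
      ∫ t in (0 : ℝ)..1, (triangle t : ℂ) * Complex.exp (d * t) := by
    refine intervalIntegral.integral_congr fun t ht ↦ ?_
    rw [uIcc_of_le zero_le_one] at ht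
    simp [triangle_of_mem_Icc ht]
  have hneg : ∫ t in (0 : ℝ)..1, (triangle t : ℂ) * Complex.exp (-c * t) =
      ∫ t in (-1 : ℝ)..0, (triangle t : ℂ) * Complex.exp (c * t) := by
    simpa [triangle_neg] using
      intervalIntegral.integral_comp_neg (a := (0 : ℝ)) (b := 1)
        fun t ↦ (triangle t : ℂ) * Complex.exp (c * t)
  rw [hhalf, hhalf, hneg, intervalIntegral.integral_add_adjacent_intervals
    (hcont.intervalIntegrable _ _) (hcont.intervalIntegrable _ _),
    intervalIntegral.integral_of_le (by norm_num), setIntegral_eq_integral_of_forall_compl_eq_zero]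
  intro t ht
  have : triangle t = 0 := triangle_eq_zero <| le_of_not_gt fun hlt ↦
    ht ⟨(abs_lt.1 hlt).1, (abs_lt.1 hlt).2.le⟩
  simp [this]

lemma fejerKernel_eq_integral_triangle (v : ℝ) :
    (fejerKernel v : ℂ) = ∫ t : ℝ, (triangle t : ℂ) * Complex.exp (Complex.I * t * v) := by
  simp only [mul_right_comm Complex.I _ (v : ℂ)]
  rw [integral_triangle_mul_exp]
  rcases eq_or_ne v 0 with rfl | hv
  · have hhalf : ∫ t in (0 : ℝ)..1, (1 - (t : ℂ)) = 1 / 2 := by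
      have hreal : ∫ t in (0 : ℝ)..1, (1 - t) = 1 / 2 := by
        rw [intervalIntegral.integral_sub (by simp) (by simp)]; norm_num
      rw [← Complex.ofReal_inj, ← intervalIntegral.integral_ofReal] at hreal
      simpa using hreal
    simp only [Complex.ofReal_zero, mul_zero, neg_zero, zero_mul, Complex.exp_zero, mul_one, hhalf]
    norm_num [fejerKernel]
  · have hexp : Complex.exp (Complex.I * v) + Complex.exp (-(Complex.I * v)) =
        2 * (Real.cos v : ℂ) := by
      rw [Complex.ofReal_cos, Complex.two_cos]; ring_nf
    have hker : (fejerKernel v : ℂ) * v ^ 2 = 2 * (1 - (Real.cos v : ℂ)) :=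
      mod_cast fejerKernel_mul_sq v
    rw [integral_one_sub_mul_exp (by simpa using hv), integral_one_sub_mul_exp (by simpa using hv),
      neg_sq, mul_pow, Complex.I_sq, ← add_div, eq_div_iff (by simpa using hv)]
    linear_combination -hker - hexp

lemma integrable_dilate (hK : Integrable K) {l : ℝ} (hl : 0 < l) : Integrable (dilate K l) :=
  (hK.comp_mul_left' hl.ne').const_mul l

lemma integral_dilate (K : ℝ → ℝ) {l : ℝ} (hl : 0 < l) : ∫ v, dilate K l v = ∫ v, K v := by
  unfold dilate
  rw [integral_const_mul, Measure.integral_comp_mul_left, abs_of_pos (by positivity), smul_eq_mul]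
  field_simp

lemma tendsto_intervalIntegral_dilate (hK : Integrable K) (hδ : 0 < δ) :
    Tendsto (fun l : ℝ ↦ ∫ v in (-δ)..δ, dilate K l v) atTop (𝓝 (∫ v, K v)) := by
  have hlim : Tendsto (fun l : ℝ ↦ ∫ v in (l * -δ)..(l * δ), K v) atTop (𝓝 (∫ v, K v)) :=
    intervalIntegral_tendsto_integral hK
      (tendsto_id.atTop_mul_const_of_neg (by linarith)) (tendsto_id.atTop_mul_const hδ)
  refine hlim.congr' ?_
  filter_upwards [eventually_gt_atTop 0] with l hl
  unfold dilate
  rw [intervalIntegral.integral_const_mul, intervalIntegral.integral_comp_mul_left _ hl.ne',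
    smul_eq_mul]
  field_simp

lemma tendsto_integral_mul_dilate_fejerKernel (hm : Measurable h) (hb : ∀ u, |h u| ≤ C)
    (hL : LaplaceExtendsTo h G) {l : ℝ} (hl : 0 < l) :
    Tendsto (fun y : ℝ ↦ ∫ u in Ioi (0 : ℝ), h u * dilate fejerKernel l (y - u)) atTop (𝓝 0) := by
  refine tendsto_integral_mul_kernel hm hb hL (w := fun t ↦ triangle (t / l))
    (continuous_triangle.comp (by fun_prop)) ?_ (integrable_dilate integrable_fejerKernel hl)
    fun v ↦ ?_
  · have hcomp :=
      hasCompactSupport_triangle.comp_homeomorph (Homeomorph.mulRight₀ l⁻¹ (by positivity))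
    simpa [Function.comp_def, div_eq_mul_inv] using hcomp
  · have hscale := Measure.integral_comp_div
      (fun t : ℝ ↦ (triangle t : ℂ) * Complex.exp (Complex.I * t * ((l * v : ℝ) : ℂ))) l
    rw [← fejerKernel_eq_integral_triangle, abs_of_pos hl] at hscale
    rw [dilate, Complex.ofReal_mul, ← Complex.real_smul, ← hscale]
    have hl' : (l : ℂ) ≠ 0 := mod_cast hl.ne'
    congr 1 with t
    push_cast
    field_simp

lemma le_integral_mul_comp_sub_left (hm : Measurable h) (hb : ∀ u, |h u| ≤ C)
    (hK0 : ∀ v, 0 ≤ K v) (hK : Integrable K) (hδ : 0 < δ) {y : ℝ} (hy : δ < y)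
    (hη : ∀ u ∈ Icc (y - δ) (y + δ), η ≤ h u) :
    (η + C) * (∫ v in (-δ)..δ, K v) - C * ∫ v, K v ≤ ∫ u in Ioi (0 : ℝ), h u * K (y - u) := by
  set g : ℝ → ℝ := fun v ↦ (η + C) * (Ioc (-δ) δ).indicator K v - C * K v with hg
  have hnear := (hK.indicator (measurableSet_Ioc (a := -δ) (b := δ))).const_mul (η + C)
  have hg_int : ∫ v, g v = (η + C) * (∫ v in (-δ)..δ, K v) - C * ∫ v, K v := by
    rw [hg, integral_sub hnear (hK.const_mul C), integral_const_mul, integral_const_mul,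
      integral_indicator measurableSet_Ioc, intervalIntegral.integral_of_le (by linarith)]
  have hconv : Integrable fun u ↦ h u * K (y - u) :=
    (hK.comp_sub_left y).bdd_mul (c := C) hm.aestronglyMeasurable (.of_forall hb)
  rw [← hg_int, ← integral_sub_left_eq_self g volume y, ← integral_indicator measurableSet_Ioi]
  refine integral_mono ((hnear.sub (hK.const_mul C)).comp_sub_left y)
    (hconv.indicator measurableSet_Ioi) fun u ↦ ?_
  have hKu := hK0 (y - u)
  have hhu := (abs_le.1 (hb u)).1
  by_cases hu : y - u ∈ Ioc (-δ) δ
  · have hu0 : u ∈ Ioi (0 : ℝ) := by rw [mem_Ioi]; linarith [hu.2]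
    have := hη u ⟨by linarith [hu.2], by linarith [hu.1]⟩
    simp only [hg, indicator_of_mem hu, indicator_of_mem hu0]
    nlinarith
  · by_cases hu0 : u ∈ Ioi (0 : ℝ)
    · simp only [hg, indicator_of_notMem hu, indicator_of_mem hu0]
      nlinarith
    · have := mul_nonneg ((abs_nonneg _).trans (hb 0)) hKu
      simp only [hg, indicator_of_notMem hu, indicator_of_notMem hu0]
      linarith

lemma eventually_exists_lt_of_tendsto_dilate (hm : Measurable h) (hb : ∀ u, |h u| ≤ C)
    (hK0 : ∀ v, 0 ≤ K v) (hK : Integrable K) (hKpos : 0 < ∫ v, K v)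
    (hlim : ∀ l : ℝ, 0 < l →
      Tendsto (fun y : ℝ ↦ ∫ u in Ioi (0 : ℝ), h u * dilate K l (y - u)) atTop (𝓝 0))
    (hη : 0 < η) (hδ : 0 < δ) :
    ∀ᶠ y in atTop, ∃ u ∈ Icc (y - δ) (y + δ), h u < η := by
  have hmass : Tendsto (fun l : ℝ ↦ (η + C) * (∫ v in (-δ)..δ, dilate K l v) - C * ∫ v, K v)
      atTop (𝓝 (η * ∫ v, K v)) := by
    convert ((tendsto_intervalIntegral_dilate hK hδ).const_mul (η + C)).sub_const
      (C * ∫ v, K v) using 2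
    ring
  obtain ⟨l, hl_mass, hl⟩ :=
    ((hmass.eventually (lt_mem_nhds (by positivity))).and (eventually_gt_atTop 0)).exists
  filter_upwards [(hlim l hl).eventually (gt_mem_nhds hl_mass), eventually_gt_atTop δ]
    with y hy hyδ
  by_contra! hcon
  have hle := le_integral_mul_comp_sub_left (K := dilate K l) hm hb
    (fun v ↦ mul_nonneg hl.le (hK0 (l * v)))
    (integrable_dilate hK hl) hδ hyδ hcon
  rw [integral_dilate K hl] at hle
  linarith

theorem SlowlyDecreasing.tendsto_zero (hsd : SlowlyDecreasing h) (hm : Measurable h)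
    (hb : ∀ u, |h u| ≤ C) (hL : LaplaceExtendsTo h G) : Tendsto h atTop (𝓝 0) := by
  have hlim := fun l (hl : 0 < l) ↦ tendsto_integral_mul_dilate_fejerKernel hm hb hL hl
  have hlim_neg : ∀ l : ℝ, 0 < l → Tendsto
      (fun y : ℝ ↦ ∫ u in Ioi (0 : ℝ), (-h) u * dilate fejerKernel l (y - u)) atTop (𝓝 0) := by
    intro l hl
    simpa [integral_neg] using (hlim l hl).neg
  rw [Metric.tendsto_nhds]
  intro ε hε
  obtain ⟨δ, hδ, hdrop⟩ := hsd (ε / 2) (by positivity)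
  have hsmall := eventually_exists_lt_of_tendsto_dilate hm hb fejerKernel_nonneg
    integrable_fejerKernel integral_fejerKernel_pos hlim (half_pos hε) (half_pos hδ)
  have hlarge := eventually_exists_lt_of_tendsto_dilate hm.neg (by simpa using hb)
    fejerKernel_nonneg integrable_fejerKernel integral_fejerKernel_pos hlim_neg
    (half_pos hε) (half_pos hδ)
  filter_upwards [(tendsto_atTop_add_const_right atTop (δ / 2) tendsto_id).eventually hsmall,
    (tendsto_atTop_add_const_right atTop (-(δ / 2)) tendsto_id).eventually hlarge]
    with y ⟨u, hu, hu_lt⟩ ⟨v, hv, hv_lt⟩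
  simp only [id, mem_Icc, Pi.neg_apply] at hu hv hv_lt
  have hyu := hdrop y u (by linarith) (by linarith)
  have hvy := hdrop v y (by linarith) (by linarith)
  rw [Real.dist_eq, sub_zero, abs_lt]
  constructor <;> linarith

end Tauberian

/-! ### The prime number theorem -/

section PrimeNumberTheorem

open MeasureTheory Filter Topology Set
open ArithmeticFunction (vonMangoldt)

/-- The relative error `ψ (x) / x - 1` in the prime number theorem at `x = exp u`. -/
noncomputable def psiError (u : ℝ) : ℝ := Chebyshev.psi (Real.exp u) * Real.exp (-u) - 1

lemma measurable_psiError : Measurable psiError := by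
  have hpsi : Measurable fun u : ℝ ↦ Chebyshev.psi (Real.exp u) :=
    Chebyshev.psi_mono.measurable.comp Real.measurable_exp
  exact (hpsi.mul (by fun_prop)).sub_const 1

lemma psi_exp_mul_exp_neg_le (u : ℝ) :
    Chebyshev.psi (Real.exp u) * Real.exp (-u) ≤ Real.log 4 + 4 := by
  rw [Real.exp_neg, ← div_eq_mul_inv, div_le_iff₀ (Real.exp_pos u)]
  exact Chebyshev.psi_le_const_mul_self (Real.exp_pos u).le

lemma abs_psiError_le (u : ℝ) : |psiError u| ≤ Real.log 4 + 4 := by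
  have hnonneg := mul_nonneg (Chebyshev.psi_nonneg (Real.exp u)) (Real.exp_pos (-u)).le
  have hlog : 0 ≤ Real.log 4 := Real.log_nonneg (by norm_num)
  rw [abs_le, psiError]
  constructor <;> linarith [psi_exp_mul_exp_neg_le u]

lemma slowlyDecreasing_psiError : SlowlyDecreasing psiError := by
  intro η hη
  have hC : 0 < Real.log 4 + 4 := by have := Real.log_nonneg (x := 4) (by norm_num); positivity
  refine ⟨η / (Real.log 4 + 4), by positivity, fun u v huv hvu ↦ ?_⟩
  have hexp : Real.exp (-u) * (1 - (v - u)) ≤ Real.exp (-v) := by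
    calc Real.exp (-u) * (1 - (v - u)) ≤ Real.exp (-u) * Real.exp (-(v - u)) := by
          gcongr; exact Real.one_sub_le_exp_neg _
      _ = Real.exp (-v) := by rw [← Real.exp_add]; ring_nf
  have hmono : Chebyshev.psi (Real.exp u) * Real.exp (-v) ≤
      Chebyshev.psi (Real.exp v) * Real.exp (-v) := by
    gcongr
  have hdrop : Chebyshev.psi (Real.exp u) * Real.exp (-u) * (v - u) ≤ η := by
    calc _ ≤ (Real.log 4 + 4) * (η / (Real.log 4 + 4)) :=
          mul_le_mul (psi_exp_mul_exp_neg_le u) (by linarith) (by linarith) hC.le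
      _ = η := by field_simp
  have := mul_le_mul_of_nonneg_left hexp (Chebyshev.psi_nonneg (Real.exp u))
  unfold psiError
  nlinarith

lemma exists_continuousOn_LSeries_vonMangoldt_eq_add_pole :
    ∃ H : ℂ → ℂ, ContinuousOn H {s | 1 ≤ s.re} ∧
      ∀ s : ℂ, 1 < s.re → LSeries (fun n ↦ (vonMangoldt n : ℂ)) s = H s + 1 / (s - 1) := by
  refine ⟨vonMangoldt.LFunctionResidueClassAux (q := 1) 1,
    vonMangoldt.continuousOn_LFunctionResidueClassAux 1, fun s hs ↦ ?_⟩
  have hclass : vonMangoldt.residueClass (1 : ZMod 1) = fun n ↦ vonMangoldt n := by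
    funext n
    simp [vonMangoldt.residueClass, Subsingleton.elim _ (1 : ZMod 1)]
  rw [vonMangoldt.eqOn_LFunctionResidueClassAux (q := 1) (a := 1) isUnit_one hs]
  simp [hclass]

lemma sum_vonMangoldt_eq_psi (x : ℝ) :
    ∑ k ∈ Finset.Icc 1 ⌊x⌋₊, vonMangoldt k = Chebyshev.psi x := rfl

lemma LSeries_vonMangoldt_eq_mul_integral_psi_exp {s : ℂ} (hs : 1 < s.re) :
    LSeries (fun n ↦ (vonMangoldt n : ℂ)) s =
      s * ∫ u in Ioi (0 : ℝ), (Chebyshev.psi (Real.exp u) : ℂ) * Complex.exp (-s * u) := by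
  have hbigO : (fun n : ℕ ↦ ∑ k ∈ Finset.Icc 1 n, vonMangoldt k) =O[atTop]
      fun n ↦ (n : ℝ) ^ (1 : ℝ) := by
    refine Asymptotics.IsBigO.of_bound (Real.log 4 + 4) (.of_forall fun n ↦ ?_)
    have hsum := sum_vonMangoldt_eq_psi n
    rw [Nat.floor_natCast] at hsum
    rw [hsum, Real.norm_eq_abs, abs_of_nonneg (Chebyshev.psi_nonneg _)]
    simpa using Chebyshev.psi_le_const_mul_self (x := n) (by positivity)
  rw [LSeries_eq_mul_integral_of_nonneg (fun n ↦ vonMangoldt n) zero_le_one hs hbigO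
    fun _ ↦ ArithmeticFunction.vonMangoldt_nonneg]
  have hsubst := integral_comp_exp_Ioi (fun t : ℝ ↦
    (∑ k ∈ Finset.Icc 1 ⌊t⌋₊, (vonMangoldt k : ℂ)) * (t : ℂ) ^ (-(s + 1))) 0
  rw [Real.exp_zero] at hsubst
  rw [← hsubst]
  congr 1
  refine setIntegral_congr_fun measurableSet_Ioi fun u _ ↦ ?_
  have hpow : ((Real.exp u : ℝ) : ℂ) ^ (-(s + 1)) = Complex.exp (-(s + 1) * u) := by
    rw [Complex.cpow_def_of_ne_zero (by simp [Complex.exp_ne_zero]),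
      ← Complex.ofReal_log (Real.exp_pos u).le, Real.log_exp, mul_comm]
  simp only [← Complex.ofReal_sum, sum_vonMangoldt_eq_psi, hpow]
  rw [Complex.real_smul, Complex.ofReal_exp, mul_left_comm, ← Complex.exp_add]
  ring_nf

lemma integral_psi_exp_mul_exp {z : ℂ} (hz : 0 < z.re) :
    ∫ u in Ioi (0 : ℝ), (Chebyshev.psi (Real.exp u) : ℂ) * Complex.exp (-(1 + z) * u) =
      (∫ u in Ioi (0 : ℝ), (psiError u : ℂ) * Complex.exp (-z * u)) + 1 / z := by
  have hexp : ∫ u in Ioi (0 : ℝ), Complex.exp (-z * u) = 1 / z := by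
    rw [integral_exp_mul_complex_Ioi (by simpa using hz)]; simp
  rw [← hexp, ← integral_add (integrableOn_bounded_mul_exp measurable_psiError abs_psiError_le hz)
    (integrableOn_exp_mul_complex_Ioi (by simpa using hz) 0)]
  refine setIntegral_congr_fun measurableSet_Ioi fun u _ ↦ ?_
  have hsplit : Complex.exp (-(1 + z) * u) = Complex.exp (-u) * Complex.exp (-z * u) := by
    rw [← Complex.exp_add]; ring_nf
  simp only [psiError]
  push_cast
  rw [hsplit]
  ring

lemma exists_laplaceExtendsTo_psiError : ∃ G : ℂ → ℂ, LaplaceExtendsTo psiError G := by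
  obtain ⟨H, hH_cont, hH⟩ := exists_continuousOn_LSeries_vonMangoldt_eq_add_pole
  have hne {z : ℂ} (hz : 0 ≤ z.re) : 1 + z ≠ 0 := fun h0 ↦ by
    have := congrArg Complex.re h0
    simp only [Complex.add_re, Complex.one_re, Complex.zero_re] at this
    linarith
  refine ⟨fun z ↦ (H (1 + z) - 1) / (1 + z), ?_, fun z hz ↦ ?_⟩
  · refine ContinuousOn.div (ContinuousOn.sub (hH_cont.comp (by fun_prop) fun z hz ↦ ?_)
      continuousOn_const) (by fun_prop) fun z hz ↦ hne hz
    simpa using hz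
  · have hs : 1 < (1 + z).re := by simpa using hz
    have hz0 : z ≠ 0 := by rintro rfl; simp at hz
    have key := (hH _ hs).symm.trans (LSeries_vonMangoldt_eq_mul_integral_psi_exp hs)
    rw [integral_psi_exp_mul_exp hz, add_sub_cancel_left] at key
    rw [eq_div_iff (hne hz.le)]
    have hpole : (1 + z) * (1 / z) = 1 / z + 1 := by field_simp
    linear_combination -key - hpole

lemma tendsto_psi_div_self : Tendsto (fun x : ℝ ↦ Chebyshev.psi x / x) atTop (𝓝 1) := by
  obtain ⟨G, hG⟩ := exists_laplaceExtendsTo_psiError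
  have hlim := ((slowlyDecreasing_psiError.tendsto_zero measurable_psiError abs_psiError_le
    hG).comp Real.tendsto_log_atTop).add_const 1
  rw [zero_add] at hlim
  refine hlim.congr' ?_
  filter_upwards [eventually_gt_atTop 0] with x hx
  simp only [psiError, Function.comp_apply, Real.exp_neg, Real.exp_log hx]
  ring

lemma tendsto_theta_div_self : Tendsto (fun x : ℝ ↦ Chebyshev.theta x / x) atTop (𝓝 1) := by
  have hsqrt : (fun x : ℝ ↦ √x) =o[atTop] fun x ↦ x := by
    refine Asymptotics.isLittleO_of_tendsto' ?_ ?_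
    · filter_upwards [eventually_gt_atTop 0] with x hx h0
      exact absurd h0 hx.ne'
    · refine Real.tendsto_sqrt_atTop.inv_tendsto_atTop.congr fun x ↦ ?_
      rw [Real.sqrt_div_self', one_div, Pi.inv_apply]
  have hdiff := (Chebyshev.isBigO_psi_sub_theta_sqrt.trans_isLittleO hsqrt).tendsto_div_nhds_zero
  have hlim := tendsto_psi_div_self.sub hdiff
  rw [sub_zero] at hlim
  refine hlim.congr fun x ↦ ?_
  rw [Pi.sub_apply]
  ring

/-- The ratio `π (x) / (x / log x)`. -/
noncomputable def primeCountingRatio (x : ℝ) : ℝ := Nat.primeCounting ⌊x⌋₊ * Real.log x / x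

theorem tendsto_primeCountingRatio : Tendsto primeCountingRatio atTop (𝓝 1) := by
  have hlittle : (fun x : ℝ ↦ x / Real.log x ^ 2) =o[atTop] fun x : ℝ ↦ x / Real.log x := by
    have hinv : (fun x : ℝ ↦ (Real.log x)⁻¹) =o[atTop] fun _ : ℝ ↦ (1 : ℝ) := by
      rw [Asymptotics.isLittleO_one_iff]
      exact Real.tendsto_log_atTop.inv_tendsto_atTop
    refine ((Asymptotics.isBigO_refl (fun x : ℝ ↦ x / Real.log x) atTop).mul_isLittleO
      hinv).congr (fun x ↦ ?_) fun x ↦ mul_one _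
    rw [sq, div_mul_eq_div_div, div_eq_mul_inv (x / Real.log x)]
  have hlim := (Chebyshev.primeCounting_sub_theta_div_log_isBigO.trans_isLittleO
    hlittle).tendsto_div_nhds_zero.add tendsto_theta_div_self
  rw [zero_add] at hlim
  refine hlim.congr' ?_
  filter_upwards [eventually_gt_atTop 1] with x hx
  have hlog := Real.log_pos hx
  have hx0 : x ≠ 0 := by linarith
  rw [primeCountingRatio]
  field_simp
  ring

lemma primeCounting_floor_eq {x : ℝ} (hx : 1 < x) :
    (Nat.primeCounting ⌊x⌋₊ : ℝ) = primeCountingRatio x * x / Real.log x := by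
  have hlog := Real.log_pos hx
  have hx0 : x ≠ 0 := by linarith
  rw [primeCountingRatio]
  field_simp

lemma primeCounting_div_eq {n m : ℕ} (h : 1 < (n : ℝ) / m) :
    (Nat.primeCounting (n / m) : ℝ) =
      primeCountingRatio (n / m) * (n / m) / Real.log (n / m) := by
  rw [← primeCounting_floor_eq h, Nat.floor_div_eq_div]

lemma primeCounting_eq {n : ℕ} (h : 1 < (n : ℝ)) :
    (Nat.primeCounting n : ℝ) = primeCountingRatio n * n / Real.log n := by
  rw [← primeCounting_floor_eq h, Nat.floor_natCast]

lemma tendsto_log_div_log_div {c : ℝ} (hc : 0 < c) :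
    Tendsto (fun x : ℝ ↦ Real.log x / Real.log (x / c)) atTop (𝓝 1) := by
  have hdiv : Tendsto (fun x : ℝ ↦ x / c) atTop atTop := tendsto_id.atTop_div_const hc
  have hlim : Tendsto (fun x : ℝ ↦ 1 + Real.log c * (Real.log (x / c))⁻¹) atTop
      (𝓝 (1 + Real.log c * 0)) :=
    ((Real.tendsto_log_atTop.comp hdiv).inv_tendsto_atTop.const_mul _).const_add _
  rw [mul_zero, add_zero] at hlim
  refine hlim.congr' ?_
  filter_upwards [hdiv.eventually (eventually_gt_atTop 1), eventually_gt_atTop 0] with x hx hx0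
  have hlog := Real.log_pos hx
  have hsplit : Real.log x = Real.log (x / c) + Real.log c := by
    rw [Real.log_div hx0.ne' hc.ne', sub_add_cancel]
  rw [hsplit]
  field_simp

theorem tendsto_primeCounting_div_ratio {m : ℕ} (hm : 0 < m) :
    Tendsto (fun n : ℕ ↦ (Nat.primeCounting (n / m) : ℝ) / Nat.primeCounting n) atTop
      (𝓝 (1 / m)) := by
  have hm' : (0 : ℝ) < m := mod_cast hm
  have hcast : Tendsto (fun n : ℕ ↦ (n : ℝ)) atTop atTop := tendsto_natCast_atTop_atTop
  have hdiv : Tendsto (fun n : ℕ ↦ (n : ℝ) / m) atTop atTop := hcast.atTop_div_const hm'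
  have hratio := tendsto_primeCountingRatio.comp hcast
  have hlim := (((tendsto_primeCountingRatio.comp hdiv).div hratio one_ne_zero).mul
    ((tendsto_log_div_log_div hm').comp hcast)).mul_const ((1 : ℝ) / m)
  rw [div_one, one_mul, one_mul] at hlim
  refine hlim.congr' ?_
  filter_upwards [hdiv.eventually (eventually_gt_atTop 1), hcast.eventually (eventually_gt_atTop 1),
    hratio.eventually (lt_mem_nhds zero_lt_one)] with n hnm hn hpos
  rw [Function.comp_apply] at hpos
  have := Real.log_pos hnm
  have := Real.log_pos hn
  rw [primeCounting_div_eq hnm, primeCounting_eq hn]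
  simp only [Function.comp_apply, Pi.div_apply]
  field_simp

lemma eventually_div_two_mul_log_le_primeCounting :
    ∀ᶠ n : ℕ in atTop, (n : ℝ) / (2 * Real.log n) ≤ Nat.primeCounting n := by
  have hcast : Tendsto (fun n : ℕ ↦ (n : ℝ)) atTop atTop := tendsto_natCast_atTop_atTop
  filter_upwards [hcast.eventually (tendsto_primeCountingRatio.eventually
    (lt_mem_nhds (by norm_num : (1 / 2 : ℝ) < 1))), hcast.eventually (eventually_gt_atTop 1)]
    with n hratio hn
  have hlog := Real.log_pos hn
  rw [primeCounting_eq hn, ← div_div, div_le_div_iff_of_pos_right hlog]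
  nlinarith

lemma eventually_primeCounting_div_le :
    ∀ᶠ n : ℕ in atTop, ∀ j : ℕ, 0 < j → j * j ≤ n →
      (Nat.primeCounting (n / j) : ℝ) ≤ 8 * Nat.primeCounting n / j := by
  obtain ⟨X, hX⟩ := eventually_atTop.1
    (tendsto_primeCountingRatio.eventually (gt_mem_nhds (by norm_num : (1 : ℝ) < 2)))
  have hcast : Tendsto (fun n : ℕ ↦ (n : ℝ)) atTop atTop := tendsto_natCast_atTop_atTop
  have hsqrt := Real.tendsto_sqrt_atTop.comp hcast
  filter_upwards [eventually_div_two_mul_log_le_primeCounting,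
    hcast.eventually (eventually_gt_atTop 1), hsqrt.eventually (eventually_ge_atTop X),
    hsqrt.eventually (eventually_gt_atTop 1)] with n hlow hn hXn hsqrt_gt j hj hjn
  rw [Function.comp_apply] at hXn hsqrt_gt
  have hj' : (0 : ℝ) < j := mod_cast hj
  have hlog := Real.log_pos hn
  have hge : √(n : ℝ) ≤ n / j := by
    have hj_le : (j : ℝ) ≤ √n := Real.le_sqrt_of_sq_le (by rw [sq]; exact_mod_cast hjn)
    rw [le_div_iff₀ hj']
    calc √(n : ℝ) * j ≤ √(n : ℝ) * √(n : ℝ) := by gcongr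
      _ = n := Real.mul_self_sqrt (by positivity)
  have hlog_ge : Real.log n / 2 ≤ Real.log (n / j) := by
    rw [← Real.log_sqrt (by positivity)]
    exact Real.log_le_log (by positivity) hge
  rw [primeCounting_div_eq (hsqrt_gt.trans_le hge)]
  calc primeCountingRatio (n / j) * (n / j) / Real.log (n / j)
      ≤ 2 * (n / j) / (Real.log n / 2) := by gcongr; exact (hX _ (hXn.trans hge)).le
    _ = 8 * ((n : ℝ) / (2 * Real.log n)) / j := by field_simp; norm_num
    _ ≤ _ := by gcongr

end PrimeNumberTheorem

/-! ### Multiplicative Sidon sets without large prime factors -/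

section SidonSets

open Finset

variable {k n B D : ℕ} {A : Finset ℕ}

lemma MulKSidon.prod_ne_prod (hA : MulKSidon k A) {R : Finset (ℕ × ℕ)}
    (hRA : ∀ e ∈ R, e.1 * e.2 ∈ A) (hinj : Set.InjOn (fun e : ℕ × ℕ ↦ e.1 * e.2) R)
    {i x y : Fin k → ℕ} (hi : Function.Injective i) (hx : ∀ j, (i j, x j) ∈ R)
    (hy : ∀ j, (i j, y j) ∈ R) (hxy : ∀ j, x j ≠ y j) : ∏ j, x j ≠ ∏ j, y j := by
  intro hprod
  refine hA ⟨fun j ↦ i j * x j, fun j ↦ i j * y j, fun j ↦ hRA _ (hx j), fun j ↦ hRA _ (hy j),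
    Sum.elim_injective.2 ⟨fun j l h ↦ ?_, fun j l h ↦ ?_, fun j l h ↦ ?_⟩,
    by simp only [prod_mul_distrib, hprod]⟩
  · exact hi (congrArg Prod.fst (hinj (hx j) (hx l) h))
  · exact hi (congrArg Prod.fst (hinj (hy j) (hy l) h))
  · have heq := hinj (hx j) (hy l) h
    cases hi (congrArg Prod.fst heq)
    exact hxy j (congrArg Prod.snd heq)

-- `k` rows sharing `k` columns `e` give equal products along `e` and along its cyclic shift.
lemma MulKSidon.card_filter_le_card_row (hA : MulKSidon k A) (hk : 2 ≤ k) {R : Finset (ℕ × ℕ)}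
    (hRA : ∀ e ∈ R, e.1 * e.2 ∈ A) (hinj : Set.InjOn (fun e : ℕ × ℕ ↦ e.1 * e.2) R)
    (I X : Finset ℕ) : #{i ∈ I | k ≤ #{x ∈ X | (i, x) ∈ R}} ≤ (k - 1) * #X ^ k := by
  by_contra! hlt
  have hrow : ∀ i ∈ I.filter (fun i ↦ k ≤ #{x ∈ X | (i, x) ∈ R}),
      ∃ t ⊆ X.filter (fun x ↦ (i, x) ∈ R), #t = k := fun i hi ↦
    exists_subset_card_eq (mem_filter.1 hi).2
  choose! t ht_sub ht_card using hrow
  obtain ⟨s, hs, hs_lt⟩ := exists_lt_card_fiber_of_mul_lt_card_of_maps_to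
    (t := powersetCard k X) (n := k - 1)
    (fun i hi ↦ mem_powersetCard.2 ⟨(ht_sub i hi).trans (filter_subset _ _), ht_card i hi⟩)
    (by
      rw [card_powersetCard, mul_comm]
      exact (Nat.mul_le_mul_left _ (Nat.choose_le_pow _ _)).trans_lt hlt)
  obtain ⟨J, hJ, hJ_card⟩ := exists_subset_card_eq (Nat.le_of_pred_lt hs_lt)
  set i := J.orderEmbOfFin hJ_card
  set e := s.orderEmbOfFin (mem_powersetCard.1 hs).2
  have hmem (a b : Fin k) : (i a, e b) ∈ R := by
    obtain ⟨hi, hti⟩ := mem_filter.1 (hJ (J.orderEmbOfFin_mem hJ_card a))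
    have heb : e b ∈ t (i a) := hti ▸ s.orderEmbOfFin_mem _ b
    exact (mem_filter.1 (ht_sub _ hi heb)).2
  refine hA.prod_ne_prod hRA hinj i.injective (fun j ↦ hmem j j)
    (fun j ↦ hmem j (finRotate k j)) (fun j h ↦ ?_) (Equiv.prod_comp (finRotate k) e).symm
  obtain ⟨m, rfl⟩ := Nat.exists_eq_add_of_le' hk
  have := e.injective h
  rw [finRotate_apply, left_eq_add] at this
  exact one_ne_zero this

lemma sum_le_mul_card_add {ι : Type*} (I : Finset ι) (f : ι → ℕ) {b k : ℕ}
    (hb : ∀ i ∈ I, f i ≤ b) : ∑ i ∈ I, f i ≤ (k - 1) * #I + #{i ∈ I | k ≤ f i} * b := by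
  rw [← sum_filter_add_sum_filter_not I (fun i ↦ k ≤ f i), add_comm]
  gcongr
  · calc ∑ i ∈ I with ¬k ≤ f i, f i ≤ #{i ∈ I | ¬k ≤ f i} • (k - 1) :=
          sum_le_card_nsmul _ _ _ fun i hi ↦ by have := (mem_filter.1 hi).2; omega
      _ ≤ (k - 1) * #I := by rw [smul_eq_mul, mul_comm]; gcongr; exact filter_subset _ _
  · exact sum_le_card_nsmul _ _ _ fun i hi ↦ hb i (mem_filter.1 hi).1

lemma MulKSidon.card_le_of_injOn_mul (hA : MulKSidon k A) (hk : 2 ≤ k) {R : Finset (ℕ × ℕ)}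
    (hRA : ∀ e ∈ R, e.1 * e.2 ∈ A) (hinj : Set.InjOn (fun e : ℕ × ℕ ↦ e.1 * e.2) R)
    {I X : Finset ℕ} (hR : R ⊆ I ×ˢ X) : #R ≤ (k - 1) * #I + (k - 1) * #X ^ (k + 1) := by
  have hcard : #R = ∑ i ∈ I, #{x ∈ X | (i, x) ∈ R} := by
    rw [← filter_mem_eq_inter.trans (inter_eq_right.2 hR)]
    simp only [card_filter, sum_product]
    refine sum_congr rfl fun i hi ↦ sum_congr rfl fun x hx ↦ ?_
    simp [hi, hx]
  calc #R ≤ (k - 1) * #I + #{i ∈ I | k ≤ #{x ∈ X | (i, x) ∈ R}} * #X :=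
        hcard ▸ sum_le_mul_card_add I _ fun i _ ↦ card_filter_le _ _
    _ ≤ (k - 1) * #I + (k - 1) * #X ^ k * #X := by
        gcongr; exact hA.card_filter_le_card_row hk hRA hinj I X
    _ = _ := by rw [pow_succ, mul_assoc]

lemma MulKSidon.card_le_of_dvd_mem_Ico (hA : MulKSidon k A) (hk : 2 ≤ k) {L : ℕ} (hL : 0 < L)
    {W : Finset ℕ} (hWA : W ⊆ A) (hWn : W ⊆ Icc 1 n) {u : ℕ → ℕ} (hdvd : ∀ a ∈ W, u a ∣ a)
    (hu : ∀ a ∈ W, u a ∈ Ico L (L + B)) :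
    #W ≤ (k - 1) * (n / L) + (k - 1) * B ^ (k + 1) := by
  have hmul : ∀ a ∈ W, a / u a * u a = a := fun a ha ↦ Nat.div_mul_cancel (hdvd a ha)
  set R := W.image fun a ↦ (a / u a, u a) with hRdef
  have hcard : #R = #W := card_image_of_injOn fun a ha b hb hab ↦ by
    simp only [Prod.mk.injEq] at hab
    rw [← hmul a ha, ← hmul b hb, hab.1, hab.2]
  have hR : R ⊆ Icc 1 (n / L) ×ˢ Ico L (L + B) := by
    simp only [hRdef, image_subset_iff, mem_product]
    refine fun a ha ↦ ⟨mem_Icc.2 ⟨?_, ?_⟩, hu a ha⟩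
    · have ha0 := (mem_Icc.1 (hWn ha)).1
      exact Nat.div_pos (Nat.le_of_dvd ha0 (hdvd a ha)) (hL.trans_le (mem_Ico.1 (hu a ha)).1)
    · exact (Nat.div_le_div_left (mem_Ico.1 (hu a ha)).1 hL).trans
        (Nat.div_le_div_right (mem_Icc.1 (hWn ha)).2)
  have hinj : Set.InjOn (fun e : ℕ × ℕ ↦ e.1 * e.2) R := by
    simp only [hRdef, coe_image]
    rintro _ ⟨a, ha, rfl⟩ _ ⟨b, hb, rfl⟩ hab
    simp only [hmul a ha, hmul b hb] at hab
    rw [hab]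
  have hRA : ∀ e ∈ R, e.1 * e.2 ∈ A :=
    forall_mem_image.2 fun a ha ↦ by rw [hmul a ha]; exact hWA ha
  simpa [hcard] using hA.card_le_of_injOn_mul hk hRA hinj hR

lemma exists_dvd_prime_or_le_mul_self {a : ℕ} (hB : 1 ≤ B) (ha : B ≤ a) :
    ∃ u, u ∣ a ∧ B ≤ u ∧ (u.Prime ∨ u ≤ B * B) := by
  have hex : ∃ u, u ∣ a ∧ B ≤ u := ⟨a, dvd_rfl, ha⟩
  obtain ⟨hdvd, hle⟩ := Nat.find_spec hex
  refine ⟨Nat.find hex, hdvd, hle, or_iff_not_imp_left.2 fun hprime ↦ ?_⟩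
  rcases (show 1 ≤ Nat.find hex by omega).eq_or_lt with hone | htwo
  · nlinarith
  · obtain ⟨q, r, hq, hr, hqr⟩ := (Nat.not_prime_iff_exists_mul_eq htwo).1 hprime
    have hqB : q < B := not_le.1 fun h ↦
      Nat.find_min hex hq ⟨(Dvd.intro r hqr).trans hdvd, h⟩
    have hrB : r < B := not_le.1 fun h ↦
      Nat.find_min hex hr ⟨(Dvd.intro_left q hqr).trans hdvd, h⟩
    rw [← hqr]
    exact Nat.mul_le_mul hqB.le hrB.le

/-- The primes `p ≤ n` with `⌊n / p⌋ < D`. Almost all primes up to `n` are of this kind, and they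
govern the structure of a multiplicative Sidon subset of `[n]`. -/
noncomputable def largePrimes (n D : ℕ) : Finset ℕ := {p ∈ Icc 1 n | p.Prime ∧ n / p < D}

lemma mem_largePrimes {p : ℕ} : p ∈ largePrimes n D ↔ p.Prime ∧ p ≤ n ∧ n / p < D := by
  rw [largePrimes, mem_filter, mem_Icc]
  exact ⟨fun ⟨⟨_, hpn⟩, hp, hD⟩ ↦ ⟨hp, hpn, hD⟩, fun ⟨hp, hpn, hD⟩ ↦ ⟨⟨hp.pos, hpn⟩, hp, hD⟩⟩

lemma prime_of_mem_largePrimes {p : ℕ} (hp : p ∈ largePrimes n D) : p.Prime :=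
  (mem_largePrimes.1 hp).1

lemma lt_mul_of_mem_largePrimes {p : ℕ} (hp : p ∈ largePrimes n D) : n < D * p :=
  (Nat.div_lt_iff_lt_mul (prime_of_mem_largePrimes hp).pos).1 (mem_largePrimes.1 hp).2.2

lemma eq_of_mem_largePrimes_of_dvd (hD : D * D ≤ n) {p q a : ℕ} (hp : p ∈ largePrimes n D)
    (hq : q ∈ largePrimes n D) (ha : a ∈ Icc 1 n) (hpa : p ∣ a) (hqa : q ∣ a) : p = q := by
  by_contra hne
  have hcoprime := (Nat.coprime_primes (prime_of_mem_largePrimes hp)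
    (prime_of_mem_largePrimes hq)).2 hne
  have hpq := Nat.le_of_dvd (mem_Icc.1 ha).1 (hcoprime.mul_dvd_of_dvd_of_dvd hpa hqa)
  have hDp := lt_mul_of_mem_largePrimes hp
  have hDq : D < q := lt_of_mul_lt_mul_left (hD.trans_lt (lt_mul_of_mem_largePrimes hq)) D.zero_le
  have := (mem_Icc.1 ha).2
  nlinarith

lemma exists_dvd_mul_le_of_forall_largePrimes_not_dvd (hB : 1 ≤ B) (hBD : B * B * D ≤ n) {a : ℕ}
    (ha : a ∈ Icc 1 n) (hBa : B ≤ a) (hlarge : ∀ p ∈ largePrimes n D, ¬ p ∣ a) :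
    ∃ u, u ∣ a ∧ B ≤ u ∧ u * D ≤ n := by
  obtain ⟨u, hua, hBu, hu | hu⟩ := exists_dvd_prime_or_le_mul_self hB hBa
  · refine ⟨u, hua, hBu, not_lt.1 fun hlt ↦ hlarge u (mem_largePrimes.2 ⟨hu, ?_, ?_⟩) hua⟩
    · exact (Nat.le_of_dvd (mem_Icc.1 ha).1 hua).trans (mem_Icc.1 ha).2
    · rwa [Nat.div_lt_iff_lt_mul hu.pos, mul_comm]
  · exact ⟨u, hua, hBu, (Nat.mul_le_mul_right D hu).trans hBD⟩

lemma MulKSidon.card_filter_forall_largePrimes_not_dvd_le (hA : MulKSidon k A) (hk : 2 ≤ k)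
    (hAn : A ⊆ Icc 1 n) (hB : 1 ≤ B) (hD : 1 ≤ D) (hBD : B * B * D ≤ n) :
    #{a ∈ A | ∀ p ∈ largePrimes n D, ¬ p ∣ a} ≤
      B + ∑ j ∈ Icc 1 (n / (D * B)), ((k - 1) * (n / (j * B)) + (k - 1) * B ^ (k + 1)) := by
  set S := A.filter fun a ↦ ∀ p ∈ largePrimes n D, ¬ p ∣ a
  set T := S.filter fun a ↦ B ≤ a
  have hTS : T ⊆ S := filter_subset _ _
  have hTA : T ⊆ A := hTS.trans (filter_subset _ _)
  have hsmall : #{a ∈ S | ¬B ≤ a} ≤ B := by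
    refine (card_le_card fun a ha ↦ ?_).trans (card_range B).le
    exact mem_range.2 (not_le.1 (mem_filter.1 ha).2)
  rw [← card_filter_add_card_filter_not (s := S) (fun a ↦ B ≤ a), add_comm]
  refine Nat.add_le_add hsmall ?_
  choose! u hu_dvd hu_ge hu_le using fun a (ha : a ∈ T) ↦
    exists_dvd_mul_le_of_forall_largePrimes_not_dvd hB hBD (hAn (hTA ha)) (mem_filter.1 ha).2
      (mem_filter.1 (hTS ha)).2
  have hmaps : ∀ a ∈ T, u a / B ∈ Icc 1 (n / (D * B)) := fun a ha ↦ by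
    rw [mem_Icc, ← Nat.div_div_eq_div_mul]
    exact ⟨(Nat.one_le_div_iff hB).2 (hu_ge a ha),
      Nat.div_le_div_right ((Nat.le_div_iff_mul_le hD).2 (hu_le a ha))⟩
  rw [card_eq_sum_card_fiberwise hmaps]
  refine sum_le_sum fun j hj ↦ hA.card_le_of_dvd_mem_Ico hk (Nat.mul_pos (mem_Icc.1 hj).1 hB)
    ((filter_subset _ _).trans hTA) (((filter_subset _ _).trans hTA).trans hAn) (u := u)
    (fun a ha ↦ hu_dvd a (mem_filter.1 ha).1) fun a ha ↦ ?_
  rw [← (mem_filter.1 ha).2, mem_Ico]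
  exact ⟨Nat.div_mul_le_self _ _, by
    simpa [add_mul] using Nat.lt_mul_of_div_lt (Nat.lt_succ_self (u a / B)) hB⟩

end SidonSets

/-! ### Sets structured by a product-free graph -/

section RegularSets

open Finset

variable {k n D m : ℕ} {A : Finset ℕ} {G : SimpleGraph ℕ}

lemma productFree_iff_forall_prod_ne : ProductFree G ↔ (∀ a b, G.Adj a b → 0 < a) ∧
    ∀ x y : Fin 3 → ℕ, (∀ i, G.Adj (x i) (y i)) → ∏ i, x i ≠ ∏ i, y i := by
  refine and_congr_right fun hpos ↦ ?_
  have hcross {a₁ b₁ a₂ b₂ a₃ b₃ : ℕ} (h₁ : G.Adj a₁ b₁) (h₂ : G.Adj a₂ b₂) (h₃ : G.Adj a₃ b₃) :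
      (a₁ / b₁ : ℚ) * (a₂ / b₂) = a₃ / b₃ ↔ a₁ * a₂ * b₃ = b₁ * b₂ * a₃ := by
    have hb₁ := (hpos _ _ h₁.symm).ne'
    have hb₂ := (hpos _ _ h₂.symm).ne'
    have hb₃ := (hpos _ _ h₃.symm).ne'
    rw [div_mul_div_comm, div_eq_div_iff (by positivity) (by positivity), mul_comm (a₃ : ℚ)]
    norm_cast
  constructor
  · intro hG x y hxy hprod
    refine hG _ _ _ _ _ _ (hxy 0) (hxy 1) (hxy 2).symm ((hcross (hxy 0) (hxy 1) (hxy 2).symm).2 ?_)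
    simpa only [Fin.prod_univ_three] using hprod
  · intro hG a₁ b₁ a₂ b₂ a₃ b₃ h₁ h₂ h₃ heq
    refine hG ![a₁, a₂, b₃] ![b₁, b₂, a₃] ?_ ?_
    · simp [Fin.forall_fin_succ, h₁, h₂, h₃.symm]
    · simpa [Fin.prod_univ_three] using (hcross h₁ h₂ h₃).1 heq

/-- The fiber of `A ⊆ [n]` over `p`: the cofactors `x ≤ n / p` with `p * x ∈ A`. -/
noncomputable def fiber (n : ℕ) (A : Finset ℕ) (p : ℕ) : Finset ℕ :=
  {x ∈ Icc 1 (n / p) | p * x ∈ A}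

lemma mem_fiber {p x : ℕ} : x ∈ fiber n A p ↔ x ∈ Icc 1 (n / p) ∧ p * x ∈ A := mem_filter

lemma mul_mem_Icc_iff {p x : ℕ} (hp : 0 < p) : p * x ∈ Icc 1 n ↔ x ∈ Icc 1 (n / p) := by
  rw [mem_Icc, mem_Icc, Nat.le_div_iff_mul_le hp, mul_comm x, Nat.one_le_iff_ne_zero,
    Nat.one_le_iff_ne_zero, mul_ne_zero_iff, and_iff_right hp.ne']

lemma div_mem_fiber (hA : A ⊆ Icc 1 n) {a p : ℕ} (hp : 0 < p) (ha : a ∈ A) (hpa : p ∣ a) :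
    a / p ∈ fiber n A p := by
  have hmul : p * (a / p) ∈ A := by rwa [Nat.mul_div_cancel' hpa]
  exact mem_fiber.2 ⟨(mul_mem_Icc_iff hp).1 (hA hmul), hmul⟩

/-- The subsets of `[m]` that are empty, a singleton or an edge of `G`. There are
`e(G_m) + m + 1` of them, which is the factor occurring in `gProd`. -/
noncomputable def admissibleFibers (G : SimpleGraph ℕ) (m : ℕ) : Finset (Finset ℕ) :=
  {S ∈ (Icc 1 m).powerset | #S ≤ 1 ∨ ∃ x y, G.Adj x y ∧ S = {x, y}}

lemma mem_admissibleFibers {S : Finset ℕ} :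
    S ∈ admissibleFibers G m ↔ S ⊆ Icc 1 m ∧ (#S ≤ 1 ∨ ∃ x y, G.Adj x y ∧ S = {x, y}) := by
  rw [admissibleFibers, mem_filter, mem_powerset]

lemma card_le_two_of_mem_admissibleFibers {S : Finset ℕ} (hS : S ∈ admissibleFibers G m) :
    #S ≤ 2 := by
  obtain hcard | ⟨x, y, -, rfl⟩ := (mem_admissibleFibers.1 hS).2
  · omega
  · exact card_le_two

lemma adj_of_mem_admissibleFibers {S : Finset ℕ} (hS : S ∈ admissibleFibers G m) {x y : ℕ}
    (hx : x ∈ S) (hy : y ∈ S) (hxy : x ≠ y) : G.Adj x y := by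
  obtain hcard | ⟨u, v, huv, rfl⟩ := (mem_admissibleFibers.1 hS).2
  · exact absurd (card_le_one.1 hcard x hx y hy) hxy
  · rw [mem_insert, mem_singleton] at hx hy
    obtain rfl | rfl := hx <;> obtain rfl | rfl := hy
    exacts [absurd rfl hxy, huv, huv.symm, absurd rfl hxy]

lemma card_powerset_filter_card_le_one {α : Type*} (s : Finset α) :
    #{t ∈ s.powerset | #t ≤ 1} = #s + 1 := by
  have hdisj : Disjoint (powersetCard 0 s) (powersetCard 1 s) :=
    s.pairwise_disjoint_powersetCard zero_ne_one
  have hunion : {t ∈ s.powerset | #t ≤ 1} = powersetCard 0 s ∪ powersetCard 1 s := by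
    ext t
    simp only [mem_filter, mem_powerset, mem_union, mem_powersetCard]
    rw [Nat.le_one_iff_eq_zero_or_eq_one, and_or_left]
  rw [hunion, card_union_of_disjoint hdisj, card_powersetCard, card_powersetCard,
    Nat.choose_zero_right, Nat.choose_one_right, add_comm]

lemma card_powerset_filter_adj (G : SimpleGraph ℕ) (m : ℕ) :
    #{S ∈ (Icc 1 m).powerset | ∃ x y, G.Adj x y ∧ S = {x, y}} = eOn G m := by
  refine (card_nbij (fun p ↦ {p.1, p.2}) ?_ ?_ ?_).symm
  · rintro ⟨x, y⟩ hp
    obtain ⟨hmem, -, hxy⟩ := mem_filter.1 hp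
    obtain ⟨hx, hy⟩ := mem_product.1 hmem
    exact mem_filter.2 ⟨mem_powerset.2 (insert_subset hx (singleton_subset_iff.2 hy)), x, y, hxy,
      rfl⟩
  · rintro ⟨x, y⟩ hp ⟨u, v⟩ hq heq
    have hxy : x < y := (mem_filter.1 hp).2.1
    have huv : u < v := (mem_filter.1 hq).2.1
    have hmem (z : ℕ) : z = x ∨ z = y ↔ z = u ∨ z = v := by
      simpa only [mem_insert, mem_singleton] using Finset.ext_iff.1 heq z
    have hx := (hmem x).1 (.inl rfl)
    have hy := (hmem y).1 (.inr rfl)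
    rw [Prod.mk.injEq]
    omega
  · intro S hS
    obtain ⟨hS, x, y, hxy, rfl⟩ := mem_filter.1 hS
    obtain ⟨hx, hy⟩ := insert_subset_iff.1 (mem_powerset.1 hS)
    rw [singleton_subset_iff] at hy
    obtain hlt | hlt := lt_or_gt_of_ne hxy.ne
    · exact ⟨(x, y), mem_filter.2 ⟨mem_product.2 ⟨hx, hy⟩, hlt, hxy⟩, rfl⟩
    · exact ⟨(y, x), mem_filter.2 ⟨mem_product.2 ⟨hy, hx⟩, hlt, hxy.symm⟩, pair_comm y x⟩

lemma card_admissibleFibers (G : SimpleGraph ℕ) (m : ℕ) :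
    #(admissibleFibers G m) = eOn G m + m + 1 := by
  have hdisj : Disjoint ((Icc 1 m).powerset.filter (#· ≤ 1))
      ((Icc 1 m).powerset.filter fun S ↦ ∃ x y, G.Adj x y ∧ S = {x, y}) := by
    refine disjoint_filter.2 fun S _ hcard ⟨x, y, hxy, hS⟩ ↦ ?_
    rw [hS, card_pair hxy.ne] at hcard
    omega
  rw [admissibleFibers, filter_or, card_union_of_disjoint hdisj, card_powerset_filter_adj,
    card_powerset_filter_card_le_one, Nat.card_Icc]
  omega

/-- The subsets of `[n]` all of whose elements have a large prime factor, and all of whose fibers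
over large primes are admissible for `G`. -/
noncomputable def regularSets (n D : ℕ) (G : SimpleGraph ℕ) : Finset (Finset ℕ) :=
  {A ∈ (Icc 1 n).powerset | (∀ a ∈ A, ∃ p ∈ largePrimes n D, p ∣ a) ∧
    ∀ p ∈ largePrimes n D, fiber n A p ∈ admissibleFibers G (n / p)}

lemma mem_regularSets : A ∈ regularSets n D G ↔ A ⊆ Icc 1 n ∧
    (∀ a ∈ A, ∃ p ∈ largePrimes n D, p ∣ a) ∧
      ∀ p ∈ largePrimes n D, fiber n A p ∈ admissibleFibers G (n / p) := by
  rw [regularSets, mem_filter, mem_powerset]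

lemma subset_of_forall_fiber_eq {A' : Finset ℕ} (hA : A ∈ regularSets n D G)
    (hfiber : ∀ p ∈ largePrimes n D, fiber n A p = fiber n A' p) : A ⊆ A' := by
  intro a ha
  obtain ⟨hAn, hdvd, -⟩ := mem_regularSets.1 hA
  obtain ⟨p, hp, hpa⟩ := hdvd a ha
  have hmem := div_mem_fiber hAn (prime_of_mem_largePrimes hp).pos ha hpa
  rw [hfiber p hp, mem_fiber, Nat.mul_div_cancel' hpa] at hmem
  exact hmem.2

lemma exists_mem_regularSets_fiber_eq (hD : D * D ≤ n) {f : ∀ p ∈ largePrimes n D, Finset ℕ}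
    (hf : f ∈ (largePrimes n D).pi fun p ↦ admissibleFibers G (n / p)) :
    ∃ A ∈ regularSets n D G, ∀ p hp, fiber n A p = f p hp := by
  set A := {a ∈ Icc 1 n | ∃ p, ∃ hp : p ∈ largePrimes n D, p ∣ a ∧ a / p ∈ f p hp} with hA
  rw [mem_pi] at hf
  have hfiber (p) (hp : p ∈ largePrimes n D) : fiber n A p = f p hp := by
    have hp0 := (prime_of_mem_largePrimes hp).pos
    ext x
    rw [mem_fiber, hA, mem_filter, mul_mem_Icc_iff hp0]
    constructor
    · rintro ⟨hx, -, q, hq, hqx, hmem⟩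
      obtain rfl := eq_of_mem_largePrimes_of_dvd hD hp hq ((mul_mem_Icc_iff hp0).2 hx)
        (dvd_mul_right p x) hqx
      rwa [Nat.mul_div_cancel_left x hp0] at hmem
    · intro hx
      have hxn := (mem_admissibleFibers.1 (hf p hp)).1 hx
      exact ⟨hxn, hxn, p, hp, dvd_mul_right p x, by rwa [Nat.mul_div_cancel_left x hp0]⟩
  refine ⟨A, mem_regularSets.2 ⟨filter_subset _ _, fun a ha ↦ ?_, fun p hp ↦ ?_⟩, hfiber⟩
  · obtain ⟨-, p, hp, hpa, -⟩ := mem_filter.1 ha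
    exact ⟨p, hp, hpa⟩
  · exact hfiber p hp ▸ hf p hp

theorem card_regularSets (hD : D * D ≤ n) (G : SimpleGraph ℕ) :
    #(regularSets n D G) = ∏ p ∈ largePrimes n D, (eOn G (n / p) + n / p + 1) := by
  simp only [← card_admissibleFibers]
  rw [← card_pi]
  refine card_nbij (fun A p _ ↦ fiber n A p) (fun A hA ↦ ?_) (fun A hA A' hA' heq ↦ ?_)
    fun f hf ↦ ?_
  · exact mem_pi.2 (mem_regularSets.1 hA).2.2
  · have hfiber : ∀ p ∈ largePrimes n D, fiber n A p = fiber n A' p := fun p hp ↦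
      congrFun (congrFun heq p) hp
    exact (subset_of_forall_fiber_eq hA hfiber).antisymm
      (subset_of_forall_fiber_eq hA' fun p hp ↦ (hfiber p hp).symm)
  · obtain ⟨A, hA, hfiber⟩ := exists_mem_regularSets_fiber_eq hD (mem_coe.1 hf)
    exact ⟨A, hA, funext₂ hfiber⟩

lemma adj_div_of_mem_regularSets (hA : A ∈ regularSets n D G) {p a b : ℕ}
    (hp : p ∈ largePrimes n D) (ha : a ∈ A) (hb : b ∈ A) (hpa : p ∣ a) (hpb : p ∣ b)
    (hab : a ≠ b) : G.Adj (a / p) (b / p) := by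
  obtain ⟨hAn, -, hfiber⟩ := mem_regularSets.1 hA
  have hp0 := (prime_of_mem_largePrimes hp).pos
  exact adj_of_mem_admissibleFibers (hfiber p hp) (div_mem_fiber hAn hp0 ha hpa)
    (div_mem_fiber hAn hp0 hb hpb) fun h ↦ hab ((Nat.div_left_inj hpa hpb).1 h)

lemma eq_of_mem_regularSets_of_dvd (hA : A ∈ regularSets n D G) {p a b c : ℕ}
    (hp : p ∈ largePrimes n D) (ha : a ∈ A) (hb : b ∈ A) (hc : c ∈ A) (hpa : p ∣ a)
    (hpb : p ∣ b) (hpc : p ∣ c) (hac : a ≠ c) (hbc : b ≠ c) : a = b := by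
  obtain ⟨hAn, -, hfiber⟩ := mem_regularSets.1 hA
  have hp0 := (prime_of_mem_largePrimes hp).pos
  by_contra hab
  have hsub : {a / p, b / p, c / p} ⊆ fiber n A p := by
    simp only [insert_subset_iff, singleton_subset_iff]
    exact ⟨div_mem_fiber hAn hp0 ha hpa, div_mem_fiber hAn hp0 hb hpb, div_mem_fiber hAn hp0 hc hpc⟩
  have hthree : #{a / p, b / p, c / p} = 3 := card_eq_three.2
    ⟨_, _, _, mt (Nat.div_left_inj hpa hpb).1 hab, mt (Nat.div_left_inj hpa hpc).1 hac,
      mt (Nat.div_left_inj hpb hpc).1 hbc, rfl⟩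
  have htwo := card_le_two_of_mem_admissibleFibers (hfiber p hp)
  have := card_le_card hsub
  omega

-- A large prime dividing `a i` divides some `b (σ i)`, and `σ` is a permutation since a fiber has
-- at most two elements; cancelling the large primes leaves a relation between edges of `G`.
lemma exists_adj_prod_eq_of_mem_regularSets (hD : D * D ≤ n) (hA : A ∈ regularSets n D G)
    {a b : Fin k → ℕ} (ha : ∀ i, a i ∈ A) (hb : ∀ i, b i ∈ A) (hinj : a.Injective)
    (hab : ∀ i j, a i ≠ b j) (hprod : ∏ i, a i = ∏ i, b i) :
    ∃ x y : Fin k → ℕ, (∀ i, G.Adj (x i) (y i)) ∧ ∏ i, x i = ∏ i, y i := by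
  obtain ⟨hAn, hlarge, -⟩ := mem_regularSets.1 hA
  choose p hp hpa using fun i ↦ hlarge (a i) (ha i)
  have hdvd (i) : ∃ j, p i ∣ b j := by
    have hpb : p i ∣ ∏ j, b j := hprod ▸ (hpa i).trans (dvd_prod_of_mem a (mem_univ i))
    simpa using ((prime_of_mem_largePrimes (hp i)).prime.dvd_finsetProd_iff b).1 hpb
  choose σ hpb using hdvd
  have hσ : σ.Injective := fun i j hij ↦ by
    have hpij : p i = p j := eq_of_mem_largePrimes_of_dvd hD (hp i) (hp j) (hAn (hb (σ i)))
      (hpb i) (hij ▸ hpb j)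
    exact hinj (eq_of_mem_regularSets_of_dvd hA (hp i) (ha i) (ha j) (hb (σ i)) (hpa i)
      (hpij ▸ hpa j) (hpb i) (hab i _) (hab j _))
  refine ⟨fun i ↦ a i / p i, fun i ↦ b (σ i) / p i, fun i ↦
    adj_div_of_mem_regularSets hA (hp i) (ha i) (hb (σ i)) (hpa i) (hpb i) (hab i _), ?_⟩
  have hp0 : 0 < ∏ i, p i := prod_pos fun i _ ↦ (prime_of_mem_largePrimes (hp i)).pos
  refine Nat.eq_of_mul_eq_mul_left hp0 ?_
  simp only [← prod_mul_distrib, Nat.mul_div_cancel' (hpa _), Nat.mul_div_cancel' (hpb _)]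
  rw [hprod, (Finite.injective_iff_bijective.1 hσ).prod_comp b]

lemma ProductFree.mulKSidon_of_mem_regularSets (hG : ProductFree G) (hD : D * D ≤ n)
    (hA : A ∈ regularSets n D G) : MulKSidon 3 A := by
  rintro ⟨a, b, ha, hb, hinj, hprod⟩
  obtain ⟨ha_inj, -, hab⟩ := Sum.elim_injective.1 hinj
  obtain ⟨x, y, hxy, heq⟩ := exists_adj_prod_eq_of_mem_regularSets hD hA ha hb ha_inj hab hprod
  exact (productFree_iff_forall_prod_ne.1 hG).2 x y hxy heq

theorem ProductFree.prod_le_Sk (hG : ProductFree G) (hD : D * D ≤ n) :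
    ∏ p ∈ largePrimes n D, (eOn G (n / p) + n / p + 1) ≤ Sk 3 n := by
  rw [← card_regularSets hD]
  refine card_le_card fun A hA ↦ mem_filter.2 ⟨?_, hG.mulKSidon_of_mem_regularSets hD hA⟩
  exact mem_powerset.2 (mem_regularSets.1 hA).1

end RegularSets

/-! ### Multiplicative 3-Sidon sets are nearly regular -/

section UpperBound

open Finset

variable {k n B D M : ℕ} {A : Finset ℕ} {G : SimpleGraph ℕ}

lemma exists_injective_forall_mem_of_card_le {ι α : Type*} [Fintype ι] (t : ι → Finset α)
    (ht : ∀ i, Fintype.card ι ≤ #(t i)) : ∃ f : ι → α, f.Injective ∧ ∀ i, f i ∈ t i := by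
  refine (all_card_le_biUnion_card_iff_exists_injective t).1 fun s ↦ ?_
  obtain rfl | ⟨i, hi⟩ := s.eq_empty_or_nonempty
  · simp
  · exact s.card_le_univ.trans ((ht i).trans (card_le_card (subset_biUnion_of_mem t hi)))

lemma card_powerset_filter_card_le {α : Type*} (s : Finset α) (E : ℕ) :
    #{t ∈ s.powerset | #t ≤ E} ≤ (#s + 1) ^ E := by
  have hmaps : ∀ t ∈ s.powerset.filter (#· ≤ E), #t ∈ range (E + 1) := fun t ht ↦
    mem_range.2 (Nat.lt_succ_of_le (mem_filter.1 ht).2)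
  rw [card_eq_sum_card_fiberwise hmaps, add_pow]
  refine sum_le_sum fun i hi ↦ ?_
  have hsub : {t ∈ s.powerset.filter (#· ≤ E) | #t = i} ⊆ powersetCard i s := fun t ht ↦ by
    obtain ⟨ht, hcard⟩ := mem_filter.1 ht
    exact mem_powersetCard.2 ⟨mem_powerset.1 (mem_filter.1 ht).1, hcard⟩
  calc #{t ∈ s.powerset.filter (#· ≤ E) | #t = i} ≤ #(powersetCard i s) := card_le_card hsub
    _ ≤ #s ^ i := (card_powersetCard i s).trans_le (Nat.choose_le_pow _ _)
    _ ≤ #s ^ i * 1 ^ (E - i) * E.choose i := by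
        rw [one_pow, mul_one]
        exact Nat.le_mul_of_pos_right _ (Nat.choose_pos (Nat.lt_succ_iff.1 (mem_range.1 hi)))

lemma finite_setOf_support_subset {V : Type*} {s : Set V} (hs : s.Finite) :
    {G : SimpleGraph V | G.support ⊆ s}.Finite := by
  refine Set.Finite.of_injOn (f := fun G ↦ {e : V × V | G.Adj e.1 e.2}) ?_ ?_
    (hs.prod hs).finite_subsets
  · intro G hG e he
    exact ⟨hG ⟨e.2, he⟩, hG ⟨e.1, he.symm⟩⟩
  · intro G _ H _ heq
    ext x y
    exact Set.ext_iff.1 heq (x, y)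

/-- The product-free graphs all of whose edges lie in `[M]`. -/
noncomputable def productFreeGraphs (M : ℕ) : Finset (SimpleGraph ℕ) :=
  {G ∈ (finite_setOf_support_subset (Icc 1 M).finite_toSet).toFinset | ProductFree G}

lemma mem_productFreeGraphs :
    G ∈ productFreeGraphs M ↔ G.support ⊆ Icc 1 M ∧ ProductFree G := by
  rw [productFreeGraphs, mem_filter, Set.Finite.mem_toFinset, Set.mem_ofPred_eq]

/-- `G` together with all pairs not contained in `{0, …, M}`. -/
def addLargeEdges (M : ℕ) (G : SimpleGraph ℕ) : SimpleGraph ℕ where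
  Adj x y := x ≠ y ∧ (x ≤ M → y ≤ M → G.Adj x y)
  symm := ⟨fun _ _ h ↦ ⟨h.1.symm, fun hy hx ↦ (h.2 hx hy).symm⟩⟩
  loopless := ⟨fun _ h ↦ h.1 rfl⟩

lemma eOn_addLargeEdges {m : ℕ} (hm : m ≤ M) (G : SimpleGraph ℕ) :
    eOn (addLargeEdges M G) m = eOn G m := by
  refine congrArg card (filter_congr fun e he ↦ and_congr_right fun _ ↦ ?_)
  obtain ⟨he₁, he₂⟩ := mem_product.1 he
  have h₁ := (mem_Icc.1 he₁).2.trans hm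
  have h₂ := (mem_Icc.1 he₂).2.trans hm
  exact ⟨fun h ↦ h.2 h₁ h₂, fun h ↦ ⟨h.ne, fun _ _ ↦ h⟩⟩

/-- The pairs in `[M]` that are the fiber of `A` over at least three large primes. Three is the
number of edges in the definition of `ProductFree`, so that any three edges can be realised by
distinct primes. -/
noncomputable def popularGraph (n D M : ℕ) (A : Finset ℕ) : SimpleGraph ℕ where
  Adj x y := x ≠ y ∧ x ∈ Icc 1 M ∧ y ∈ Icc 1 M ∧ 3 ≤ #{p ∈ largePrimes n D | fiber n A p = {x, y}}
  symm := ⟨fun x y h ↦ ⟨h.1.symm, h.2.2.1, h.2.1, by simpa only [pair_comm y x] using h.2.2.2⟩⟩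
  loopless := ⟨fun _ h ↦ h.1 rfl⟩

lemma support_popularGraph_subset : (popularGraph n D M A).support ⊆ Icc 1 M :=
  fun _ ⟨_, h⟩ ↦ h.2.1

lemma injOn_mul_filter_largePrimes (hD : D * D ≤ n) (hAn : A ⊆ Icc 1 n) (X : Finset ℕ) :
    Set.InjOn (fun e : ℕ × ℕ ↦ e.1 * e.2)
      ({e ∈ largePrimes n D ×ˢ X | e.1 * e.2 ∈ A} : Finset (ℕ × ℕ)) := by
  rintro ⟨p, x⟩ hpx ⟨q, y⟩ hqy (heq : p * x = q * y)
  obtain ⟨hpX, hA⟩ := mem_filter.1 hpx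
  obtain ⟨hp, -⟩ := mem_product.1 hpX
  obtain ⟨hq, -⟩ := mem_product.1 (mem_filter.1 hqy).1
  obtain rfl := eq_of_mem_largePrimes_of_dvd hD hp hq (hAn hA) (dvd_mul_right p x)
    (heq ▸ dvd_mul_right q y)
  rw [Nat.eq_of_mul_eq_mul_left (prime_of_mem_largePrimes hp).pos heq]

lemma MulKSidon.productFree_popularGraph (hA : MulKSidon 3 A) (hD : D * D ≤ n)
    (hAn : A ⊆ Icc 1 n) : ProductFree (popularGraph n D M A) := by
  refine productFree_iff_forall_prod_ne.2
    ⟨fun x _ hxy ↦ (mem_Icc.1 hxy.2.1).1, fun x y hxy ↦ ?_⟩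
  obtain ⟨p, hp_inj, hp⟩ := exists_injective_forall_mem_of_card_le
    (fun j ↦ (largePrimes n D).filter fun p ↦ fiber n A p = {x j, y j}) fun j ↦ (hxy j).2.2.2
  simp only [mem_filter] at hp
  have hmem (j) {z : ℕ} (hz : z ∈ ({x j, y j} : Finset ℕ)) (hzM : z ∈ Icc 1 M) :
      (p j, z) ∈ {e ∈ largePrimes n D ×ˢ Icc 1 M | e.1 * e.2 ∈ A} := by
    rw [← (hp j).2, mem_fiber] at hz
    exact mem_filter.2 ⟨mem_product.2 ⟨(hp j).1, hzM⟩, hz.2⟩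
  exact hA.prod_ne_prod (fun e he ↦ (mem_filter.1 he).2)
    (injOn_mul_filter_largePrimes hD hAn (Icc 1 M)) hp_inj
    (fun j ↦ hmem j (mem_insert_self _ _) (hxy j).2.1)
    (fun j ↦ hmem j (mem_insert_of_mem (mem_singleton_self _)) (hxy j).2.2.1) fun j ↦ (hxy j).1

lemma fiber_subset_Icc_of_mem_largePrimes {p : ℕ} (hp : p ∈ largePrimes n D) :
    fiber n A p ⊆ Icc 1 D :=
  (filter_subset _ _).trans (Icc_subset_Icc_right (mem_largePrimes.1 hp).2.2.le)

lemma MulKSidon.card_filter_le_card_fiber (hA : MulKSidon k A) (hk : 2 ≤ k) (hD : D * D ≤ n)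
    (hAn : A ⊆ Icc 1 n) : #{p ∈ largePrimes n D | k ≤ #(fiber n A p)} ≤ (k - 1) * D ^ k := by
  have hrows := hA.card_filter_le_card_row hk (fun e he ↦ (mem_filter.1 he).2)
    (injOn_mul_filter_largePrimes hD hAn (Icc 1 D)) (largePrimes n D) (Icc 1 D)
  rw [Nat.card_Icc, Nat.add_sub_cancel] at hrows
  refine (card_le_card fun p hp ↦ ?_).trans hrows
  obtain ⟨hp, hcard⟩ := mem_filter.1 hp
  refine mem_filter.2 ⟨hp, hcard.trans (card_le_card fun x hx ↦ ?_)⟩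
  have hxD := fiber_subset_Icc_of_mem_largePrimes hp hx
  exact mem_filter.2 ⟨hxD, mem_filter.2 ⟨mem_product.2 ⟨hp, hxD⟩, (mem_fiber.1 hx).2⟩⟩

/-- The large primes over which the fiber of `A` is not accounted for by its popular graph. -/
noncomputable def exceptionalPrimes (n D M : ℕ) (A : Finset ℕ) : Finset ℕ :=
  {p ∈ largePrimes n D |
    fiber n A p ∉ admissibleFibers (addLargeEdges M (popularGraph n D M A)) (n / p)}

lemma exists_fiber_eq_of_mem_exceptionalPrimes {p : ℕ} (hp : p ∈ exceptionalPrimes n D M A)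
    (hcard : #(fiber n A p) < 3) : ∃ z ∈ Icc 1 M ×ˢ Icc 1 M, fiber n A p = {z.1, z.2} ∧
      #{q ∈ largePrimes n D | fiber n A q = {z.1, z.2}} ≤ 2 := by
  have hsub : fiber n A p ⊆ Icc 1 (n / p) := filter_subset _ _
  have hnot := (mem_filter.1 hp).2
  rw [mem_admissibleFibers, and_iff_right hsub] at hnot
  push Not at hnot
  obtain ⟨hone, hedge⟩ := hnot
  obtain ⟨x, y, hxy, hfiber⟩ := card_eq_two.1 (by omega : #(fiber n A p) = 2)
  obtain ⟨hx, hy⟩ := insert_subset_iff.1 (hfiber ▸ hsub)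
  have hnadj := mt (hedge x y) (not_not.2 hfiber)
  simp only [addLargeEdges, popularGraph] at hnadj
  push Not at hnadj
  obtain ⟨hxM, hyM, hrare⟩ := hnadj hxy
  have hxM : x ∈ Icc 1 M := mem_Icc.2 ⟨(mem_Icc.1 hx).1, hxM⟩
  have hyM : y ∈ Icc 1 M := mem_Icc.2 ⟨(mem_Icc.1 (singleton_subset_iff.1 hy)).1, hyM⟩
  exact ⟨(x, y), mem_product.2 ⟨hxM, hyM⟩, hfiber, Nat.lt_succ_iff.1 (hrare hxy hxM hyM)⟩

lemma MulKSidon.card_exceptionalPrimes_le (hA : MulKSidon 3 A) (hD : D * D ≤ n)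
    (hAn : A ⊆ Icc 1 n) : #(exceptionalPrimes n D M A) ≤ 2 * D ^ 3 + 2 * M ^ 2 := by
  set rarePairs := {z ∈ Icc 1 M ×ˢ Icc 1 M | #{q ∈ largePrimes n D | fiber n A q = {z.1, z.2}} ≤ 2}
  have hpairs : #(rarePairs.biUnion fun z ↦ {q ∈ largePrimes n D | fiber n A q = {z.1, z.2}}) ≤
      2 * M ^ 2 := calc
    _ ≤ #rarePairs * 2 := card_biUnion_le_card_mul _ _ _ fun z hz ↦ (mem_filter.1 hz).2
    _ ≤ #(Icc 1 M ×ˢ Icc 1 M) * 2 := by gcongr; exact filter_subset _ _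
    _ = 2 * M ^ 2 := by rw [card_product, Nat.card_Icc, Nat.add_sub_cancel]; ring
  have hlarge := hA.card_filter_le_card_fiber (by norm_num) hD hAn
  refine (card_le_card fun p hp ↦ ?_).trans
    ((card_union_le _ _).trans (Nat.add_le_add hlarge hpairs))
  have hp' := (mem_filter.1 hp).1
  obtain hcard | hcard := le_or_gt 3 #(fiber n A p)
  · exact mem_union_left _ (mem_filter.2 ⟨hp', hcard⟩)
  · obtain ⟨z, hz, hfiber, hrare⟩ := exists_fiber_eq_of_mem_exceptionalPrimes hp hcard
    exact mem_union_right _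
      (mem_biUnion.2 ⟨z, mem_filter.2 ⟨hz, hrare⟩, mem_filter.2 ⟨hp', hfiber⟩⟩)

/-- The elements of `A` whose removal makes it regular for its popular graph: those without a
large prime factor and those divisible by an exceptional prime. -/
noncomputable def rareElements (n D M : ℕ) (A : Finset ℕ) : Finset ℕ :=
  {a ∈ A | (∀ p ∈ largePrimes n D, ¬ p ∣ a) ∨ ∃ p ∈ exceptionalPrimes n D M A, p ∣ a}

lemma rareElements_subset : rareElements n D M A ⊆ A := filter_subset _ _

/-- An upper bound for the number of rare elements of a multiplicative 3-Sidon subset of `[n]`.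
An element `≥ B` without a large prime factor has a divisor in some `[j * B, (j + 1) * B)` with
`j ≤ n / (D * B)`; the last summand accounts for the exceptional primes. -/
def rareBound (n B D M : ℕ) : ℕ :=
  B + ∑ j ∈ Icc 1 (n / (D * B)), (2 * (n / (j * B)) + 2 * B ^ 4) + (2 * D ^ 3 + 2 * M ^ 2) * D

lemma MulKSidon.card_rareElements_le (hA : MulKSidon 3 A) (hAn : A ⊆ Icc 1 n) (hB : 1 ≤ B)
    (hD : 1 ≤ D) (hBD : B * B * D ≤ n) (hDD : D * D ≤ n) :
    #(rareElements n D M A) ≤ rareBound n B D M := by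
  rw [rareElements, filter_or]
  refine (card_union_le _ _).trans (Nat.add_le_add
    (hA.card_filter_forall_largePrimes_not_dvd_le (by norm_num) hAn hB hD hBD) ?_)
  have hsub : {a ∈ A | ∃ p ∈ exceptionalPrimes n D M A, p ∣ a} ⊆
      (exceptionalPrimes n D M A).biUnion fun p ↦ (fiber n A p).image (p * ·) := fun a ha ↦ by
    obtain ⟨ha, p, hp, hpa⟩ := mem_filter.1 ha
    have hp0 := (prime_of_mem_largePrimes (mem_filter.1 hp).1).pos
    exact mem_biUnion.2 ⟨p, hp, mem_image.2
      ⟨a / p, div_mem_fiber hAn hp0 ha hpa, Nat.mul_div_cancel' hpa⟩⟩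
  refine (card_le_card hsub).trans ((card_biUnion_le_card_mul _ _ D fun p hp ↦ ?_).trans
    (Nat.mul_le_mul_right D (hA.card_exceptionalPrimes_le hDD hAn)))
  calc #((fiber n A p).image (p * ·)) ≤ #(fiber n A p) := card_image_le
    _ ≤ #(Icc 1 D) := card_le_card (fiber_subset_Icc_of_mem_largePrimes (mem_filter.1 hp).1)
    _ = D := by rw [Nat.card_Icc, Nat.add_sub_cancel]

lemma fiber_sdiff_rareElements_of_mem {p : ℕ} (hp : p ∈ exceptionalPrimes n D M A) :
    fiber n (A \ rareElements n D M A) p = ∅ := by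
  refine filter_false_of_mem fun x _ hmem ↦ ?_
  obtain ⟨hA, hrare⟩ := mem_sdiff.1 hmem
  exact hrare (mem_filter.2 ⟨hA, .inr ⟨p, hp, dvd_mul_right p x⟩⟩)

lemma fiber_sdiff_rareElements_of_notMem (hD : D * D ≤ n) (hAn : A ⊆ Icc 1 n) {p : ℕ}
    (hp : p ∈ largePrimes n D) (hexc : p ∉ exceptionalPrimes n D M A) :
    fiber n (A \ rareElements n D M A) p = fiber n A p := by
  refine filter_congr fun x _ ↦ ⟨fun h ↦ (mem_sdiff.1 h).1, fun hA ↦ mem_sdiff.2 ⟨hA, ?_⟩⟩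
  intro hrare
  obtain hnone | ⟨q, hq, hqx⟩ := (mem_filter.1 hrare).2
  · exact hnone p hp (dvd_mul_right p x)
  · obtain rfl := eq_of_mem_largePrimes_of_dvd hD hp (mem_filter.1 hq).1 (hAn hA)
      (dvd_mul_right p x) hqx
    exact hexc hq

lemma sdiff_rareElements_mem_regularSets (hD : D * D ≤ n) (hAn : A ⊆ Icc 1 n) :
    A \ rareElements n D M A ∈ regularSets n D (addLargeEdges M (popularGraph n D M A)) := by
  refine mem_regularSets.2 ⟨sdiff_subset.trans hAn, fun a ha ↦ ?_, fun p hp ↦ ?_⟩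
  · obtain ⟨haA, hrare⟩ := mem_sdiff.1 ha
    by_contra! hnone
    exact hrare (mem_filter.2 ⟨haA, .inl hnone⟩)
  · by_cases hexc : p ∈ exceptionalPrimes n D M A
    · rw [fiber_sdiff_rareElements_of_mem hexc]
      exact mem_admissibleFibers.2 ⟨empty_subset _, .inl (by simp)⟩
    · rw [fiber_sdiff_rareElements_of_notMem hD hAn hp hexc]
      by_contra hnot
      exact hexc (mem_filter.2 ⟨hp, hnot⟩)

theorem Sk_three_le (M : ℕ) (hB : 1 ≤ B) (hD : 1 ≤ D) (hBD : B * B * D ≤ n) (hDD : D * D ≤ n) :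
    Sk 3 n ≤ (n + 1) ^ rareBound n B D M * ∑ G ∈ productFreeGraphs M,
      ∏ p ∈ largePrimes n D, (eOn (addLargeEdges M G) (n / p) + n / p + 1) := by
  set small := {S ∈ (Icc 1 n).powerset | #S ≤ rareBound n B D M}
  set regular := (productFreeGraphs M).biUnion fun G ↦ regularSets n D (addLargeEdges M G)
  have hsub : {A ∈ (Icc 1 n).powerset | MulKSidon 3 A} ⊆
      (small ×ˢ regular).image fun z ↦ z.1 ∪ z.2 := by
    intro A hA
    obtain ⟨hAn, hA⟩ := mem_filter.1 hA
    rw [mem_powerset] at hAn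
    refine mem_image.2 ⟨(rareElements n D M A, A \ rareElements n D M A), mem_product.2 ⟨?_, ?_⟩,
      union_sdiff_of_subset rareElements_subset⟩
    · exact mem_filter.2 ⟨mem_powerset.2 (rareElements_subset.trans hAn),
        hA.card_rareElements_le hAn hB hD hBD hDD⟩
    · exact mem_biUnion.2 ⟨popularGraph n D M A, mem_productFreeGraphs.2
        ⟨support_popularGraph_subset, hA.productFree_popularGraph hDD hAn⟩,
        sdiff_rareElements_mem_regularSets hDD hAn⟩
  have hsmall : #small ≤ (n + 1) ^ rareBound n B D M := by
    simpa using card_powerset_filter_card_le (Icc 1 n) (rareBound n B D M)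
  calc Sk 3 n ≤ #small * #regular :=
        (card_le_card hsub).trans (card_image_le.trans (card_product _ _).le)
    _ ≤ _ := Nat.mul_le_mul hsmall (card_biUnion_le.trans_eq
        (sum_congr rfl fun G _ ↦ card_regularSets hDD _))

end UpperBound

/-! ### The logarithm of the infinite product -/

section LogGProd

open Finset Filter Topology

/-- The logarithm of `e(G_m) + m + 1`, the number of choices a product-free graph `G` leaves for
the multiples of a large prime `p` with `⌊n / p⌋ = m`. -/
noncomputable def logWeight (G : SimpleGraph ℕ) (m : ℕ) : ℝ :=
  Real.log ((eOn G m : ℝ) + m + 1)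

/-- The logarithm of the factor of `gProd G` with index `m`; the paper's index is `m + 1`. -/
noncomputable def logTerm (G : SimpleGraph ℕ) (m : ℕ) : ℝ :=
  logWeight G (m + 1) * ((1 : ℝ) / (((m : ℝ) + 1) ^ 2 + ((m : ℝ) + 1)))

lemma eOn_le (G : SimpleGraph ℕ) (m : ℕ) : eOn G m ≤ m * m :=
  (card_le_card (filter_subset _ _)).trans (by simp)

lemma logWeight_nonneg (G : SimpleGraph ℕ) (m : ℕ) : 0 ≤ logWeight G m :=
  Real.log_nonneg (le_add_of_nonneg_left (by positivity))

lemma logWeight_le (G : SimpleGraph ℕ) (m : ℕ) : logWeight G m ≤ 2 * Real.log (m + 1) := by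
  have hedges : (eOn G m : ℝ) ≤ m * m := mod_cast eOn_le G m
  calc logWeight G m ≤ Real.log (((m : ℝ) + 1) ^ 2) :=
        Real.log_le_log (by positivity) (by nlinarith [Nat.cast_nonneg (α := ℝ) m])
    _ = 2 * Real.log (m + 1) := by rw [Real.log_pow, Nat.cast_ofNat]

lemma logTerm_nonneg (G : SimpleGraph ℕ) (m : ℕ) : 0 ≤ logTerm G m :=
  mul_nonneg (logWeight_nonneg G (m + 1)) (by positivity)

lemma log_add_one_le_two_mul_rpow {x : ℝ} (hx : 0 ≤ x) :
    Real.log (x + 1) ≤ 2 * x ^ (1 / 2 : ℝ) := by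
  have hrpow : (x + 1) ^ (1 / 2 : ℝ) ≤ x ^ (1 / 2 : ℝ) + 1 := by
    simpa using Real.rpow_add_le_add_rpow hx zero_le_one (p := 1 / 2) (by norm_num) (by norm_num)
  have hlog := Real.log_le_sub_one_of_pos (show 0 < (x + 1) ^ (1 / 2 : ℝ) by positivity)
  rw [Real.log_rpow (by positivity)] at hlog
  linarith

lemma logTerm_le (G : SimpleGraph ℕ) (m : ℕ) :
    logTerm G m ≤ 4 * ((m + 1 : ℕ) : ℝ) ^ (-(3 / 2) : ℝ) := by
  have hweight := logWeight_le G (m + 1)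
  have hlog := log_add_one_le_two_mul_rpow (Nat.cast_nonneg (m + 1))
  have hk_pos : (0 : ℝ) < (m + 1 : ℕ) := Nat.cast_pos.2 m.succ_pos
  rw [logTerm, ← Nat.cast_add_one]
  generalize m + 1 = k at *
  calc logWeight G k * (1 / ((k : ℝ) ^ 2 + k))
      ≤ (4 * (k : ℝ) ^ (1 / 2 : ℝ)) * (1 / (k : ℝ) ^ 2) := by
        gcongr <;> linarith
    _ = 4 * (k : ℝ) ^ (-(3 / 2) : ℝ) := by
        rw [mul_assoc, one_div ((k : ℝ) ^ 2), ← Real.rpow_natCast, ← Real.rpow_neg hk_pos.le,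
          ← Real.rpow_add hk_pos]
        norm_num

lemma summable_four_mul_rpow :
    Summable fun m : ℕ ↦ 4 * ((m + 1 : ℕ) : ℝ) ^ (-(3 / 2) : ℝ) :=
  ((summable_nat_add_iff 1).2 (Real.summable_nat_rpow.2 (by norm_num))).mul_left 4

lemma summable_logTerm (G : SimpleGraph ℕ) : Summable (logTerm G) :=
  .of_nonneg_of_le (logTerm_nonneg G) (logTerm_le G) summable_four_mul_rpow

lemma gProd_eq_exp_tsum (G : SimpleGraph ℕ) : gProd G = Real.exp (∑' m, logTerm G m) := by
  rw [← (summable_logTerm G).hasSum.rexp.tprod_eq, gProd]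
  refine tprod_congr fun m ↦ ?_
  rw [Real.rpow_def_of_pos (by positivity), Function.comp, logTerm, logWeight, Nat.cast_add_one]

lemma bddAbove_gProd :
    BddAbove {x : ℝ | ∃ G : SimpleGraph ℕ, ProductFree G ∧ x = gProd G} := by
  refine ⟨Real.exp (∑' m : ℕ, 4 * ((m + 1 : ℕ) : ℝ) ^ (-(3 / 2) : ℝ)), ?_⟩
  rintro x ⟨G, -, rfl⟩
  rw [gProd_eq_exp_tsum]
  exact Real.exp_le_exp.2 ((summable_logTerm G).tsum_le_tsum (logTerm_le G) summable_four_mul_rpow)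

lemma productFree_bot : ProductFree ⊥ :=
  ⟨fun _ _ h ↦ h.elim, fun _ _ _ _ _ _ h ↦ h.elim⟩

lemma ProductFree.gProd_le_beta {G : SimpleGraph ℕ} (hG : ProductFree G) : gProd G ≤ beta :=
  le_csSup bddAbove_gProd ⟨G, hG, rfl⟩

lemma exists_lt_gProd {c : ℝ} (hc : c < beta) :
    ∃ G : SimpleGraph ℕ, ProductFree G ∧ c < gProd G := by
  rw [beta, lt_csSup_iff bddAbove_gProd ⟨_, ⊥, productFree_bot, rfl⟩] at hc
  obtain ⟨_, ⟨G, hG, rfl⟩, hcG⟩ := hc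
  exact ⟨G, hG, hcG⟩

lemma beta_pos : 0 < beta := by
  refine lt_of_lt_of_le ?_ productFree_bot.gProd_le_beta
  rw [gProd_eq_exp_tsum]
  exact Real.exp_pos _

lemma ProductFree.sum_logTerm_le_log_beta {G : SimpleGraph ℕ} (hG : ProductFree G) (M : ℕ) :
    ∑ m ∈ range M, logTerm G m ≤ Real.log beta := by
  rw [Real.le_log_iff_exp_le beta_pos]
  refine le_trans ?_ hG.gProd_le_beta
  rw [gProd_eq_exp_tsum]
  exact Real.exp_le_exp.2 ((summable_logTerm G).sum_le_tsum _ fun m _ ↦ logTerm_nonneg G m)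

end LogGProd

/-! ### Averages over large primes -/

section LargePrimeAverages

open Finset Filter Topology

lemma one_le_div_of_mem_largePrimes {n D p : ℕ} (hp : p ∈ largePrimes n D) : 1 ≤ n / p := by
  obtain ⟨hprime, hle, -⟩ := mem_largePrimes.1 hp
  exact Nat.div_pos hle hprime.pos

lemma le_div_comm_of_pos {n i j : ℕ} (hi : 0 < i) (hj : 0 < j) : i ≤ n / j ↔ j ≤ n / i := by
  rw [Nat.le_div_iff_mul_le hj, Nat.le_div_iff_mul_le hi, mul_comm]

lemma card_filter_le_div_le_primeCounting {n j : ℕ} (D : ℕ) (hj : 0 < j) :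
    #{p ∈ largePrimes n D | j ≤ n / p} ≤ Nat.primeCounting (n / j) := by
  rw [← Nat.primesLE_card_eq_primeCounting]
  refine card_le_card fun p hp ↦ ?_
  obtain ⟨hp_large, hj_le⟩ := mem_filter.1 hp
  have hp_prime := prime_of_mem_largePrimes hp_large
  exact Nat.mem_primesLE.2 ⟨(le_div_comm_of_pos hj hp_prime.pos).1 hj_le, hp_prime⟩

lemma filter_div_eq_primesLE_sdiff (n : ℕ) {M m : ℕ} (hm : m < M) :
    {p ∈ largePrimes n (M + 1) | n / p - 1 = m} =
      Nat.primesLE (n / (m + 1)) \ Nat.primesLE (n / (m + 2)) := by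
  ext p
  simp only [mem_filter, Finset.mem_sdiff, mem_largePrimes, Nat.mem_primesLE]
  by_cases hp : p.Prime
  · have hle_n : p ≤ n ↔ 1 ≤ n / p := by rw [Nat.le_div_iff_mul_le hp.pos, one_mul]
    rw [le_div_comm_of_pos hp.pos m.succ_pos, le_div_comm_of_pos hp.pos (m + 1).succ_pos, hle_n]
    simp only [hp, true_and, and_true]
    omega
  · simp [hp]

lemma card_filter_div_eq (n : ℕ) {M m : ℕ} (hm : m < M) :
    (#{p ∈ largePrimes n (M + 1) | n / p - 1 = m} : ℝ) =
      Nat.primeCounting (n / (m + 1)) - Nat.primeCounting (n / (m + 2)) := by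
  have hsubset : Nat.primesLE (n / (m + 2)) ⊆ Nat.primesLE (n / (m + 1)) :=
    Nat.primesLE_mono (Nat.div_le_div_left (by omega) (by omega))
  rw [filter_div_eq_primesLE_sdiff n hm, cast_card_sdiff hsubset,
    Nat.primesLE_card_eq_primeCounting, Nat.primesLE_card_eq_primeCounting]

lemma sum_largePrimes_eq_sum_range (f : ℕ → ℝ) (n M : ℕ) :
    ∑ p ∈ largePrimes n (M + 1), f (n / p) = ∑ m ∈ range M,
      f (m + 1) * (Nat.primeCounting (n / (m + 1)) - Nat.primeCounting (n / (m + 2))) := by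
  have hmaps : ∀ p ∈ largePrimes n (M + 1), n / p - 1 ∈ range M := fun p hp ↦ by
    have hone := one_le_div_of_mem_largePrimes hp
    have hlt := (mem_largePrimes.1 hp).2.2
    rw [mem_range]
    omega
  rw [← sum_fiberwise_of_maps_to hmaps]
  refine sum_congr rfl fun m hm ↦ ?_
  have hconst : ∀ p ∈ {p ∈ largePrimes n (M + 1) | n / p - 1 = m}, f (n / p) = f (m + 1) := by
    intro p hp
    obtain ⟨hp_large, heq⟩ := mem_filter.1 hp
    rw [← heq, Nat.sub_add_cancel (one_le_div_of_mem_largePrimes hp_large)]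
  rw [sum_congr rfl hconst, sum_const, nsmul_eq_mul, card_filter_div_eq n (mem_range.1 hm),
    mul_comm]

lemma tendsto_sum_largePrimes_div_primeCounting (f : ℕ → ℝ) (M : ℕ) :
    Tendsto (fun n : ℕ ↦ (∑ p ∈ largePrimes n (M + 1), f (n / p)) / Nat.primeCounting n) atTop
      (𝓝 (∑ m ∈ range M, f (m + 1) * ((1 : ℝ) / (((m : ℝ) + 1) ^ 2 + ((m : ℝ) + 1))))) := by
  simp_rw [sum_largePrimes_eq_sum_range, sum_div, mul_div_assoc, sub_div]
  refine tendsto_finsetSum _ fun m _ ↦ Tendsto.const_mul _ ?_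
  convert (tendsto_primeCounting_div_ratio m.succ_pos).sub
    (tendsto_primeCounting_div_ratio (m + 1).succ_pos) using 2
  push_cast
  field_simp
  ring

lemma log_add_one_le_log_add_sum {M m : ℕ} (h : M ≤ m) :
    Real.log (m + 1) ≤ Real.log (M + 1) + ∑ j ∈ Ioc M m, (1 : ℝ) / j := by
  induction m, h using Nat.le_induction with
  | base => simp
  | succ m hm ih =>
    have hstep : Real.log ((m : ℝ) + 1 + 1) - Real.log ((m : ℝ) + 1) ≤ 1 / ((m : ℝ) + 1) := by
      rw [← Real.log_div (by positivity) (by positivity)]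
      refine (Real.log_le_sub_one_of_pos (by positivity)).trans (le_of_eq ?_)
      field_simp
      ring
    rw [← insert_Ioc_right_eq_Ioc_add_one hm, sum_insert (by simp)]
    push_cast
    linarith

lemma filter_largePrimes_div_lt {n M D : ℕ} (hMD : M ≤ D) :
    {p ∈ largePrimes n D | n / p < M} = largePrimes n M := by
  ext p
  simp only [mem_filter, mem_largePrimes]
  exact ⟨fun ⟨⟨hprime, hle, _⟩, hlt⟩ ↦ ⟨hprime, hle, hlt⟩,
    fun ⟨hprime, hle, hlt⟩ ↦ ⟨⟨hprime, hle, hlt.trans_le hMD⟩, hlt⟩⟩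

section Tail

variable {M n D : ℕ} {c : ℝ}

lemma sum_sum_Ioc_one_div_le
    (hc : ∀ j : ℕ, 0 < j → j ≤ D →
      (Nat.primeCounting (n / j) : ℝ) ≤ c * Nat.primeCounting n / j) (hD : 1 ≤ D) :
    ∑ p ∈ largePrimes n D with M < n / p, ∑ j ∈ Ioc M (n / p), (1 : ℝ) / j ≤
      c * Nat.primeCounting n * (2 / (M + 1)) := by
  have hnonneg : 0 ≤ c * Nat.primeCounting n := by
    simpa using (Nat.cast_nonneg _).trans (hc 1 one_pos hD)
  have hswap : ∑ p ∈ largePrimes n D with M < n / p, ∑ j ∈ Ioc M (n / p), (1 : ℝ) / j =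
      ∑ j ∈ Ioo M D, ∑ p ∈ largePrimes n D with j ≤ n / p, (1 : ℝ) / j := by
    refine sum_comm' fun p j ↦ ?_
    simp only [mem_filter, mem_Ioc, mem_Ioo]
    constructor
    · rintro ⟨⟨hp, -⟩, hj, hjp⟩
      exact ⟨⟨hp, hjp⟩, hj, hjp.trans_lt (mem_largePrimes.1 hp).2.2⟩
    · rintro ⟨⟨hp, hjp⟩, hj, -⟩
      exact ⟨⟨hp, hj.trans_le hjp⟩, hj, hjp⟩
  have hinner : ∀ j ∈ Ioo M D, ∑ p ∈ largePrimes n D with j ≤ n / p, (1 : ℝ) / j ≤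
      c * Nat.primeCounting n * ((j : ℝ) ^ 2)⁻¹ := by
    intro j hj
    rw [mem_Ioo] at hj
    have hj_pos : 0 < j := by omega
    have hcount : (#{p ∈ largePrimes n D | j ≤ n / p} : ℝ) ≤ c * Nat.primeCounting n / j :=
      (Nat.cast_le.2 (card_filter_le_div_le_primeCounting D hj_pos)).trans (hc j hj_pos hj.2.le)
    calc ∑ p ∈ largePrimes n D with j ≤ n / p, (1 : ℝ) / j
        = #{p ∈ largePrimes n D | j ≤ n / p} * ((1 : ℝ) / j) := by rw [sum_const, nsmul_eq_mul]
      _ ≤ (c * Nat.primeCounting n / j) * (1 / j) := by gcongr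
      _ = c * Nat.primeCounting n * ((j : ℝ) ^ 2)⁻¹ := by ring
  calc ∑ p ∈ largePrimes n D with M < n / p, ∑ j ∈ Ioc M (n / p), (1 : ℝ) / j
      ≤ ∑ j ∈ Ioo M D, c * Nat.primeCounting n * ((j : ℝ) ^ 2)⁻¹ :=
        hswap.trans_le (sum_le_sum hinner)
    _ = c * Nat.primeCounting n * ∑ j ∈ Ioo M D, ((j : ℝ) ^ 2)⁻¹ := by rw [mul_sum]
    _ ≤ c * Nat.primeCounting n * (2 / (M + 1)) := by
        gcongr
        exact sum_Ioo_inv_sq_le M D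

lemma sum_log_largePrimes_tail_le
    (hc : ∀ j : ℕ, 0 < j → j ≤ D →
      (Nat.primeCounting (n / j) : ℝ) ≤ c * Nat.primeCounting n / j) (hMD : M + 1 ≤ D) :
    ∑ p ∈ largePrimes n D with M < n / p, Real.log ((n / p : ℕ) + 1) ≤
      c * ((Real.log (M + 1) + 2) / (M + 1)) * Nat.primeCounting n := by
  have hcount : (#{p ∈ largePrimes n D | M < n / p} : ℝ) ≤ c * Nat.primeCounting n / (M + 1) := by
    have hcard := card_filter_le_div_le_primeCounting (n := n) D M.succ_pos
    exact_mod_cast (Nat.cast_le.2 hcard).trans (hc (M + 1) M.succ_pos hMD)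
  have hlog_nonneg : 0 ≤ Real.log ((M : ℝ) + 1) := Real.log_nonneg (by simp)
  calc ∑ p ∈ largePrimes n D with M < n / p, Real.log ((n / p : ℕ) + 1)
      ≤ ∑ p ∈ largePrimes n D with M < n / p,
          (Real.log (M + 1) + ∑ j ∈ Ioc M (n / p), (1 : ℝ) / j) :=
        sum_le_sum fun p hp ↦ log_add_one_le_log_add_sum (mem_filter.1 hp).2.le
    _ = #{p ∈ largePrimes n D | M < n / p} * Real.log (M + 1) +
          ∑ p ∈ largePrimes n D with M < n / p, ∑ j ∈ Ioc M (n / p), (1 : ℝ) / j := by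
        rw [sum_add_distrib, sum_const, nsmul_eq_mul]
    _ ≤ c * Nat.primeCounting n / (M + 1) * Real.log (M + 1) +
          c * Nat.primeCounting n * (2 / (M + 1)) :=
        add_le_add (by gcongr) (sum_sum_Ioc_one_div_le hc (by omega))
    _ = c * ((Real.log (M + 1) + 2) / (M + 1)) * Nat.primeCounting n := by ring

lemma sum_logWeight_largePrimes_le
    (hc : ∀ j : ℕ, 0 < j → j ≤ D →
      (Nat.primeCounting (n / j) : ℝ) ≤ c * Nat.primeCounting n / j)
    (G : SimpleGraph ℕ) (hMD : M + 1 ≤ D) :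
    ∑ p ∈ largePrimes n D, logWeight G (n / p) ≤
      ∑ p ∈ largePrimes n (M + 1), logWeight G (n / p) +
        2 * c * ((Real.log (M + 1) + 2) / (M + 1)) * Nat.primeCounting n := by
  rw [← sum_filter_add_sum_filter_not (largePrimes n D) (fun p ↦ n / p < M + 1),
    filter_largePrimes_div_lt hMD]
  simp only [not_lt, Nat.succ_le_iff]
  gcongr
  calc ∑ p ∈ largePrimes n D with M < n / p, logWeight G (n / p)
      ≤ ∑ p ∈ largePrimes n D with M < n / p, 2 * Real.log ((n / p : ℕ) + 1) :=
        sum_le_sum fun p _ ↦ logWeight_le G (n / p)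
    _ = 2 * ∑ p ∈ largePrimes n D with M < n / p, Real.log ((n / p : ℕ) + 1) := by rw [mul_sum]
    _ ≤ 2 * (c * ((Real.log (M + 1) + 2) / (M + 1)) * Nat.primeCounting n) := by
        gcongr
        exact sum_log_largePrimes_tail_le hc hMD
    _ = 2 * c * ((Real.log (M + 1) + 2) / (M + 1)) * Nat.primeCounting n := by ring

end Tail

lemma tendsto_log_add_one_add_div_add_one (a : ℝ) :
    Tendsto (fun M : ℕ ↦ (Real.log (M + 1) + a) / (M + 1)) atTop (𝓝 0) := by
  have hlog : Tendsto (fun x : ℝ ↦ (Real.log x + a) / x) atTop (𝓝 0) := by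
    simpa [add_div] using Real.isLittleO_log_id_atTop.tendsto_div_nhds_zero.add
      (tendsto_const_nhds.div_atTop tendsto_id : Tendsto (fun x : ℝ ↦ a / x) atTop (𝓝 0))
  exact hlog.comp (tendsto_atTop_add_const_right _ _ tendsto_natCast_atTop_atTop)

end LargePrimeAverages

/-! ### The count of rare elements is negligible -/

section RareElements

open Finset Filter Topology

lemma sum_Icc_one_div_le_one_add_log {K n : ℕ} (h : K ≤ n) :
    ∑ j ∈ Icc 1 K, (1 : ℝ) / j ≤ 1 + Real.log n :=
  calc ∑ j ∈ Icc 1 K, (1 : ℝ) / j ≤ ∑ j ∈ Icc 1 n, (1 : ℝ) / j :=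
        sum_le_sum_of_subset_of_nonneg (Icc_subset_Icc_right h) fun _ _ _ ↦ by positivity
    _ = harmonic n := by simp [harmonic_eq_sum_Icc]
    _ ≤ 1 + Real.log n := harmonic_le_one_add_log n

lemma sum_two_mul_div_add_two_mul_pow_le (n : ℕ) {B : ℕ} (hB : 1 ≤ B) :
    ((∑ j ∈ Icc 1 (n / (B ^ 5 * B)), (2 * (n / (j * B)) + 2 * B ^ 4) : ℕ) : ℝ) ≤
      n / B * (4 + 2 * Real.log n) := by
  set K := n / (B ^ 5 * B)
  have hdiv (j : ℕ) : ((n / (j * B) : ℕ) : ℝ) ≤ n / B * (1 / j) := by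
    refine Nat.cast_div_le.trans_eq ?_
    rw [Nat.cast_mul, div_mul_div_comm, mul_one, mul_comm (B : ℝ)]
  have hK : (K : ℝ) * B ^ 4 ≤ n / B := by
    rw [le_div_iff₀ (by positivity)]
    have hle : K * B ^ 4 * B ≤ n := calc
      K * B ^ 4 * B ≤ K * B ^ 4 * B * B := Nat.le_mul_of_pos_right _ hB
      _ = K * (B ^ 5 * B) := by ring
      _ ≤ n := Nat.div_mul_le_self _ _
    exact_mod_cast hle
  push_cast
  calc ∑ j ∈ Icc 1 K, (2 * ((n / (j * B) : ℕ) : ℝ) + 2 * (B : ℝ) ^ 4)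
      ≤ ∑ j ∈ Icc 1 K, (2 * ((n : ℝ) / B * (1 / j)) + 2 * (B : ℝ) ^ 4) := by
        gcongr
        exact hdiv _
    _ = 2 * (n / B * ∑ j ∈ Icc 1 K, (1 : ℝ) / j) + 2 * (K * B ^ 4) := by
        rw [sum_add_distrib, ← mul_sum, ← mul_sum, sum_const, Nat.card_Icc, nsmul_eq_mul,
          Nat.add_sub_cancel, mul_left_comm (K : ℝ)]
    _ ≤ 2 * (n / B * (1 + Real.log n)) + 2 * (n / B) := by
        gcongr
        exact sum_Icc_one_div_le_one_add_log (Nat.div_le_self _ _)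
    _ = n / B * (4 + 2 * Real.log n) := by ring

lemma rareBound_pow_five_le {n B : ℕ} (M : ℕ) (hB : 1 ≤ B) (hBn : B ^ 21 ≤ n) :
    (rareBound n B (B ^ 5) M : ℝ) ≤ n / B * (7 + 2 * M ^ 2 + 2 * Real.log n) := by
  have hpow {k : ℕ} (hk : k ≤ 20) : (B : ℝ) ^ k ≤ n / B := by
    rw [le_div_iff₀ (by positivity), ← pow_succ]
    exact_mod_cast (Nat.pow_le_pow_right hB (by omega)).trans hBn
  have hsum := sum_two_mul_div_add_two_mul_pow_le n hB
  have hone : (B : ℝ) ≤ n / B := by simpa using hpow (show 1 ≤ 20 by norm_num)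
  have hfive : (M : ℝ) ^ 2 * (B : ℝ) ^ 5 ≤ M ^ 2 * (n / B) := by
    gcongr
    exact hpow (by norm_num)
  have htwenty : ((B : ℝ) ^ 5) ^ 3 * B ^ 5 ≤ n / B := by
    rw [← pow_mul, ← pow_add]
    exact hpow le_rfl
  rw [rareBound, Nat.cast_add, Nat.cast_add]
  push_cast at hsum ⊢
  linarith

/-- The value `B = ⌊n^(1/100)⌋` of the parameter of `rareBound`; primes `p` count as large when
`⌊n / p⌋ < B ^ 5`. The exponent only has to be small enough. -/
noncomputable def cutoff (n : ℕ) : ℕ := ⌊(n : ℝ) ^ (1 / 100 : ℝ)⌋₊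

variable {n : ℕ}

lemma one_le_cutoff (hn : 1 ≤ n) : 1 ≤ cutoff n := by
  rw [cutoff, Nat.one_le_floor_iff]
  exact Real.one_le_rpow (mod_cast hn) (by norm_num)

lemma cutoff_pow_le (hn : 1 ≤ n) {k : ℕ} (hk : k ≤ 100) : cutoff n ^ k ≤ n := by
  have hhundred : (cutoff n : ℝ) ^ 100 ≤ n := calc
    (cutoff n : ℝ) ^ 100 ≤ ((n : ℝ) ^ (1 / 100 : ℝ)) ^ 100 := by
      gcongr
      exact Nat.floor_le (by positivity)
    _ = (n : ℝ) := by
      rw [← Real.rpow_natCast, ← Real.rpow_mul (by positivity)]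
      norm_num
  exact (Nat.pow_le_pow_right (one_le_cutoff hn) hk).trans (mod_cast hhundred)

lemma rpow_le_two_mul_cutoff (hn : 1 ≤ n) : (n : ℝ) ^ (1 / 100 : ℝ) ≤ 2 * cutoff n := by
  have hlt : (n : ℝ) ^ (1 / 100 : ℝ) < cutoff n + 1 := Nat.lt_floor_add_one _
  have hone : (1 : ℝ) ≤ cutoff n := mod_cast one_le_cutoff hn
  linarith

lemma tendsto_cutoff : Tendsto cutoff atTop atTop :=
  tendsto_nat_floor_atTop.comp
    ((tendsto_rpow_atTop (by norm_num)).comp tendsto_natCast_atTop_atTop)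

lemma rareBound_cutoff_mul_log_le (M : ℕ) (hn : 3 ≤ n) :
    (rareBound n (cutoff n) (cutoff n ^ 5) M : ℝ) * Real.log (n + 1) ≤
      4 * (9 + 2 * M ^ 2) * (n * Real.log n ^ 2 / (n : ℝ) ^ (1 / 100 : ℝ)) := by
  have hn_one : 1 ≤ n := by omega
  have hn_three : (3 : ℝ) ≤ n := mod_cast hn
  have hlog_one : 1 ≤ Real.log n := by
    rw [Real.le_log_iff_exp_le (by linarith)]
    linarith [Real.exp_one_lt_d9]
  have hlog_succ : Real.log ((n : ℝ) + 1) ≤ 2 * Real.log n := by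
    have hsq : Real.log ((n : ℝ) ^ 2) = 2 * Real.log n := by rw [Real.log_pow, Nat.cast_ofNat]
    rw [← hsq]
    exact Real.log_le_log (by linarith) (by nlinarith)
  have hdiv : (n : ℝ) / cutoff n ≤ 2 * n / (n : ℝ) ^ (1 / 100 : ℝ) := by
    have hcutoff : (1 : ℝ) ≤ cutoff n := mod_cast one_le_cutoff hn_one
    rw [div_le_div_iff₀ (by positivity) (by positivity)]
    nlinarith [rpow_le_two_mul_cutoff hn_one]
  have hconst : 7 + 2 * (M : ℝ) ^ 2 + 2 * Real.log n ≤ (9 + 2 * M ^ 2) * Real.log n := by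
    nlinarith [sq_nonneg (M : ℝ)]
  calc (rareBound n (cutoff n) (cutoff n ^ 5) M : ℝ) * Real.log (n + 1)
      ≤ (n / cutoff n * (7 + 2 * M ^ 2 + 2 * Real.log n)) * (2 * Real.log n) := by
        gcongr
        · exact Real.log_nonneg (by linarith)
        · exact rareBound_pow_five_le M (one_le_cutoff hn_one) (cutoff_pow_le hn_one (by norm_num))
    _ ≤ (2 * n / (n : ℝ) ^ (1 / 100 : ℝ) * ((9 + 2 * M ^ 2) * Real.log n)) *
          (2 * Real.log n) := by gcongr
    _ = 4 * (9 + 2 * M ^ 2) * (n * Real.log n ^ 2 / (n : ℝ) ^ (1 / 100 : ℝ)) := by ring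

lemma tendsto_rareBound_cutoff_mul_log_div_primeCounting (M : ℕ) :
    Tendsto (fun n : ℕ ↦ (rareBound n (cutoff n) (cutoff n ^ 5) M : ℝ) * Real.log (n + 1) /
      Nat.primeCounting n) atTop (𝓝 0) := by
  have hlim : Tendsto (fun n : ℕ ↦ 8 * (9 + 2 * (M : ℝ) ^ 2) *
      (Real.log n ^ (3 : ℝ) / (n : ℝ) ^ (1 / 100 : ℝ))) atTop (𝓝 0) := by
    have hlog := (isLittleO_log_rpow_rpow_atTop 3 (show (0 : ℝ) < 1 / 100 by norm_num))
    simpa [Function.comp_def] using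
      (hlog.tendsto_div_nhds_zero.comp tendsto_natCast_atTop_atTop).const_mul
        (8 * (9 + 2 * (M : ℝ) ^ 2))
  refine squeeze_zero' (.of_forall fun n ↦ ?_) ?_ hlim
  · have hlog : 0 ≤ Real.log ((n : ℝ) + 1) := Real.log_nonneg (by simp)
    positivity
  · filter_upwards [eventually_div_two_mul_log_le_primeCounting, eventually_ge_atTop 3]
      with n hprime hn
    have hlog_pos : 0 < Real.log n := Real.log_pos (Nat.one_lt_cast.2 (by omega))
    have hrpow : Real.log n ^ (3 : ℝ) = Real.log n ^ 3 := mod_cast Real.rpow_natCast _ 3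
    calc (rareBound n (cutoff n) (cutoff n ^ 5) M : ℝ) * Real.log (n + 1) / Nat.primeCounting n
        ≤ 4 * (9 + 2 * M ^ 2) * (n * Real.log n ^ 2 / (n : ℝ) ^ (1 / 100 : ℝ)) /
            (n / (2 * Real.log n)) :=
          div_le_div₀ (by positivity) (rareBound_cutoff_mul_log_le M hn) (by positivity) hprime
      _ = 8 * (9 + 2 * (M : ℝ) ^ 2) * (Real.log n ^ (3 : ℝ) / (n : ℝ) ^ (1 / 100 : ℝ)) := by
          rw [hrpow]
          field_simp
          ring

end RareElements

/-! ### The growth rate of the count -/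

section GrowthRate

open Finset Filter Topology

lemma natCast_prod_eq_exp_sum_logWeight (n : ℕ) (s : Finset ℕ) (G : SimpleGraph ℕ) :
    ((∏ p ∈ s, (eOn G (n / p) + n / p + 1) : ℕ) : ℝ) =
      Real.exp (∑ p ∈ s, logWeight G (n / p)) := by
  rw [Real.exp_sum]
  push_cast
  refine prod_congr rfl fun p _ ↦ ?_
  rw [logWeight, Real.exp_log (by positivity)]

lemma exp_rpow_one_div (a x : ℝ) : Real.exp a ^ ((1 : ℝ) / x) = Real.exp (a / x) := by
  rw [← Real.exp_mul, mul_one_div]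

lemma tendsto_natCast_primeCounting :
    Tendsto (fun n : ℕ ↦ (Nat.primeCounting n : ℝ)) atTop atTop :=
  tendsto_natCast_atTop_atTop.comp Nat.tendsto_primeCounting

lemma eventually_le_exp_mul_primeCounting (C : ℝ) {ε : ℝ} (hε : 0 < ε) :
    ∀ᶠ n : ℕ in atTop, C ≤ Real.exp (ε * Nat.primeCounting n) :=
  (Real.tendsto_exp_atTop.comp
    (tendsto_natCast_primeCounting.const_mul_atTop hε)).eventually_ge_atTop C

lemma eventually_pow_rareBound_cutoff_le_exp (M : ℕ) {ε : ℝ} (hε : 0 < ε) :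
    ∀ᶠ n : ℕ in atTop, ((n : ℝ) + 1) ^ rareBound n (cutoff n) (cutoff n ^ 5) M ≤
      Real.exp (ε * Nat.primeCounting n) := by
  filter_upwards [(tendsto_rareBound_cutoff_mul_log_div_primeCounting M).eventually_lt_const hε,
    tendsto_natCast_primeCounting.eventually_gt_atTop 0] with n hlt hpos
  rw [← Real.exp_log (show (0 : ℝ) < (n : ℝ) + 1 by positivity), ← Real.exp_nat_mul]
  exact Real.exp_le_exp.2 ((div_lt_iff₀ hpos).1 hlt).le

lemma sum_logTerm_addLargeEdges (M : ℕ) (G : SimpleGraph ℕ) :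
    ∑ m ∈ range M, logTerm (addLargeEdges M G) m = ∑ m ∈ range M, logTerm G m := by
  refine sum_congr rfl fun m hm ↦ ?_
  rw [logTerm, logTerm, logWeight, logWeight, eOn_addLargeEdges (mem_range.1 hm)]

lemma eventually_sum_logWeight_le (M : ℕ) {ε : ℝ} (hε : 0 < ε) :
    ∀ᶠ n : ℕ in atTop, ∀ G ∈ productFreeGraphs M,
      ∑ p ∈ largePrimes n (M + 1), logWeight (addLargeEdges M G) (n / p) ≤
        (Real.log beta + ε) * Nat.primeCounting n := by
  rw [Filter.eventually_all_finset]
  intro G hG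
  have hlt : ∑ m ∈ range M, logTerm (addLargeEdges M G) m < Real.log beta + ε := by
    rw [sum_logTerm_addLargeEdges]
    linarith [(mem_productFreeGraphs.1 hG).2.sum_logTerm_le_log_beta M]
  filter_upwards [(tendsto_sum_largePrimes_div_primeCounting _ M).eventually_lt_const hlt,
    tendsto_natCast_primeCounting.eventually_gt_atTop 0] with n havg hpos
  exact ((div_lt_iff₀ hpos).1 havg).le

lemma exists_eventually_prod_le_exp {ε : ℝ} (hε : 0 < ε) :
    ∃ M, ∀ᶠ n : ℕ in atTop, ∀ G ∈ productFreeGraphs M,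
      ((∏ p ∈ largePrimes n (cutoff n ^ 5),
        (eOn (addLargeEdges M G) (n / p) + n / p + 1) : ℕ) : ℝ) ≤
          Real.exp ((Real.log beta + 2 * ε) * Nat.primeCounting n) := by
  have htail := (tendsto_log_add_one_add_div_add_one 2).const_mul (2 * 8)
  rw [mul_zero] at htail
  obtain ⟨M, hM⟩ := (htail.eventually_lt_const hε).exists
  refine ⟨M, ?_⟩
  filter_upwards [eventually_sum_logWeight_le M hε, tendsto_cutoff.eventually_ge_atTop (M + 1),
    eventually_primeCounting_div_le, eventually_ge_atTop 1] with n hmain hcutoff hcheb hn G hG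
  have hsq : cutoff n ^ 5 * cutoff n ^ 5 ≤ n := by
    rw [← pow_add]
    exact cutoff_pow_le hn (by norm_num)
  have hle : ∑ p ∈ largePrimes n (cutoff n ^ 5), logWeight (addLargeEdges M G) (n / p) ≤
      (Real.log beta + 2 * ε) * Nat.primeCounting n := calc
    _ ≤ ∑ p ∈ largePrimes n (M + 1), logWeight (addLargeEdges M G) (n / p) +
          2 * 8 * ((Real.log (M + 1) + 2) / (M + 1)) * Nat.primeCounting n :=
        sum_logWeight_largePrimes_le
          (fun j hj hjD ↦ hcheb j hj ((Nat.mul_le_mul hjD hjD).trans hsq)) _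
          (hcutoff.trans (Nat.le_self_pow (by norm_num) _))
    _ ≤ (Real.log beta + ε) * Nat.primeCounting n + ε * Nat.primeCounting n := by
        gcongr
        exact hmain G hG
    _ = (Real.log beta + 2 * ε) * Nat.primeCounting n := by ring
  rw [natCast_prod_eq_exp_sum_logWeight]
  exact Real.exp_le_exp.2 hle

lemma Sk_three_cutoff_le (M : ℕ) {n : ℕ} (hn : 1 ≤ n) :
    (Sk 3 n : ℝ) ≤ ((n : ℝ) + 1) ^ rareBound n (cutoff n) (cutoff n ^ 5) M *
      ∑ G ∈ productFreeGraphs M, ((∏ p ∈ largePrimes n (cutoff n ^ 5),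
        (eOn (addLargeEdges M G) (n / p) + n / p + 1) : ℕ) : ℝ) := by
  have hcutoff := one_le_cutoff hn
  have hseven : cutoff n * cutoff n * cutoff n ^ 5 ≤ n := by
    rw [← pow_two, ← pow_add]
    exact cutoff_pow_le hn (by norm_num)
  have hten : cutoff n ^ 5 * cutoff n ^ 5 ≤ n := by
    rw [← pow_add]
    exact cutoff_pow_le hn (by norm_num)
  exact_mod_cast Sk_three_le M hcutoff (Nat.one_le_pow _ _ hcutoff) hseven hten

theorem eventually_Sk_three_le_exp {ε : ℝ} (hε : 0 < ε) :
    ∀ᶠ n : ℕ in atTop,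
      (Sk 3 n : ℝ) ≤ Real.exp ((Real.log beta + 4 * ε) * Nat.primeCounting n) := by
  obtain ⟨M, hM⟩ := exists_eventually_prod_le_exp hε
  filter_upwards [hM, eventually_pow_rareBound_cutoff_le_exp M hε,
    eventually_le_exp_mul_primeCounting #(productFreeGraphs M) hε, eventually_ge_atTop 1]
    with n hprod hrare hgraphs hn
  calc (Sk 3 n : ℝ) ≤ _ := Sk_three_cutoff_le M hn
    _ ≤ Real.exp (ε * Nat.primeCounting n) * (#(productFreeGraphs M) *
          Real.exp ((Real.log beta + 2 * ε) * Nat.primeCounting n)) := by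
        rw [← nsmul_eq_mul]
        gcongr
        exact sum_le_card_nsmul _ _ _ hprod
    _ ≤ Real.exp (ε * Nat.primeCounting n) * (Real.exp (ε * Nat.primeCounting n) *
          Real.exp ((Real.log beta + 2 * ε) * Nat.primeCounting n)) := by gcongr
    _ = Real.exp ((Real.log beta + 4 * ε) * Nat.primeCounting n) := by
        rw [← Real.exp_add, ← Real.exp_add]
        ring_nf

theorem eventually_Sk_three_rpow_lt {c : ℝ} (hc : beta < c) :
    ∀ᶠ n : ℕ in atTop, (Sk 3 n : ℝ) ^ ((1 : ℝ) / (Nat.primeCounting n : ℝ)) < c := by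
  have hlog := Real.log_lt_log beta_pos hc
  obtain ⟨ε, hε, hlt⟩ : ∃ ε > 0, Real.log beta + 4 * ε < Real.log c :=
    ⟨(Real.log c - Real.log beta) / 5, by linarith, by linarith⟩
  filter_upwards [eventually_Sk_three_le_exp hε,
    tendsto_natCast_primeCounting.eventually_gt_atTop 0] with n hle hpos
  calc (Sk 3 n : ℝ) ^ ((1 : ℝ) / (Nat.primeCounting n : ℝ))
      ≤ Real.exp ((Real.log beta + 4 * ε) * Nat.primeCounting n) ^
          ((1 : ℝ) / (Nat.primeCounting n : ℝ)) := by gcongr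
    _ = Real.exp (Real.log beta + 4 * ε) := by
        rw [exp_rpow_one_div, mul_div_cancel_right₀ _ hpos.ne']
    _ < c := by rwa [← Real.lt_log_iff_exp_lt (beta_pos.trans hc)]

theorem eventually_lt_Sk_three_rpow {c : ℝ} (hc : c < beta) :
    ∀ᶠ n : ℕ in atTop, c < (Sk 3 n : ℝ) ^ ((1 : ℝ) / (Nat.primeCounting n : ℝ)) := by
  obtain ⟨G, hG, hcG⟩ := exists_lt_gProd hc
  rw [gProd_eq_exp_tsum] at hcG
  obtain ⟨M, hM⟩ := ((summable_logTerm G).hasSum.tendsto_sum_nat.rexp.eventually_const_lt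
    hcG).exists
  filter_upwards [(tendsto_sum_largePrimes_div_primeCounting (logWeight G)
    M).rexp.eventually_const_lt hM, eventually_ge_atTop ((M + 1) * (M + 1))] with n hlt hn
  refine hlt.trans_le ?_
  rw [← exp_rpow_one_div, ← natCast_prod_eq_exp_sum_logWeight]
  gcongr
  exact hG.prod_le_Sk hn

end GrowthRate

theorem count_mul3Sidon :
    Filter.Tendsto
      (fun n : ℕ => (Sk 3 n : ℝ) ^ ((1 : ℝ) / (Nat.primeCounting n : ℝ)))
      Filter.atTop (nhds beta) := by
  rw [tendsto_order]
  exact ⟨fun _ hlt ↦ eventually_lt_Sk_three_rpow hlt,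
    fun _ hlt ↦ eventually_Sk_three_rpow_lt hlt⟩
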